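/- arXiv:2003.02521 — 6 statements merged into one kernel-verified Lean document; each statement's English description precedes it below -/
import Mathlib

section
/- (Main Theorem) Conjunctions of functional dependencies and unary inclusion dependencies are finitely controllable up to finite closure: for any finite set Σ of FDs and UIDs, any finite instance I₀, and any Boolean conjunctive query q, we have (I₀, Σ) ⊨_fin q if and only if (I₀, Σ*) ⊨_unr q, where Σ* is the finite closure of Σ. -/
namespace FQA

/-- A relational signature: a finite set of relation names, each with an arity `≥ 1`. -/
structure Sig where
  Rel : Type
  rel_fin : Finite Rel
  ar : Rel → ℕ
  ar_pos : ∀ R, 1 ≤ ar R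

/-- The positions of a signature: pairs of a relation and an index into its arity. -/
abbrev Sig.Pos (σ : Sig) : Type := Σ R : σ.Rel, Fin (σ.ar R)

/-- A fact `R(a₁, …, a_{ar R})` with elements from `α`. -/
abbrev Fact (σ : Sig) (α : Type) : Type := Σ R : σ.Rel, Fin (σ.ar R) → α

/-- An instance is a set of facts. -/
abbrev Inst (σ : Sig) (α : Type) : Type := Set (Fact σ α)

variable {σ : Sig} {α β : Type}

/-- Element `a` occurs at position `p` in some fact of the instance `I`. -/
def occursAt (I : Inst σ α) (p : σ.Pos) (a : α) : Prop :=
  ∃ t : Fin (σ.ar p.1) → α, (⟨p.1, t⟩ : Fact σ α) ∈ I ∧ t p.2 = a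

/-- The active domain of an instance: the elements occurring in some fact. -/
def activeDom (I : Inst σ α) : Set α :=
  {a | ∃ F : Fact σ α, F ∈ I ∧ ∃ i, F.2 i = a}

/-- A unary inclusion dependency `src ⊆ dst` (nontrivial: `src ≠ dst`). -/
structure UID (σ : Sig) where
  src : σ.Pos
  dst : σ.Pos
  ne : src ≠ dst

/-- The reverse of a UID. -/
def UID.rev (τ : UID σ) : UID σ := ⟨τ.dst, τ.src, τ.ne.symm⟩

/-- An instance satisfies a UID if every element occurring at `src` also occurs at `dst`. -/
def satUID (I : Inst σ α) (τ : UID σ) : Prop :=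
  ∀ a, occursAt I τ.src a → occursAt I τ.dst a

/-- A functional dependency `R^L → R^r`, with `L` nonempty and `r ∉ L`. -/
structure FD (σ : Sig) where
  rel : σ.Rel
  lhs : Set (Fin (σ.ar rel))
  rhs : Fin (σ.ar rel)
  lhs_nonempty : lhs.Nonempty
  rhs_not_mem : rhs ∉ lhs

/-- An instance satisfies an FD if any two facts of `rel` agreeing on `lhs` agree on `rhs`. -/
def satFD (I : Inst σ α) (φ : FD σ) : Prop :=
  ∀ t u : Fin (σ.ar φ.rel) → α,
    (⟨φ.rel, t⟩ : Fact σ α) ∈ I → (⟨φ.rel, u⟩ : Fact σ α) ∈ I →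
    (∀ i ∈ φ.lhs, t i = u i) → t φ.rhs = u φ.rhs

/-- A Boolean conjunctive query: existentially quantified variables `Fin nv` and a
conjunction (list) of constant-free atoms, in which every variable occurs. -/
structure CQ (σ : Sig) where
  nv : ℕ
  atoms : List (Fact σ (Fin nv))
  vars_occur : ∀ x : Fin nv, ∃ A ∈ atoms, ∃ i, A.2 i = x

/-- The size of a CQ: its number of atoms. -/
def CQ.size (q : CQ σ) : ℕ := q.atoms.length

/-- A Boolean CQ holds in an instance iff there is a homomorphism (a match) from its
atoms to facts of the instance. -/
def satCQ (I : Inst σ α) (q : CQ σ) : Prop :=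
  ∃ h : Fin q.nv → α, ∀ A ∈ q.atoms, (⟨A.1, fun i => h (A.2 i)⟩ : Fact σ α) ∈ I

/-- An instance satisfies a set of UIDs and a set of FDs. -/
def satAllC (I : Inst σ ℕ) (Su : Set (UID σ)) (Sf : Set (FD σ)) : Prop :=
  (∀ τ ∈ Su, satUID I τ) ∧ (∀ φ ∈ Sf, satFD I φ)

/-- Unrestricted open-world entailment: every (finite or infinite) superinstance of `I₀`
satisfying the constraints satisfies `q`. -/
def unrEntails (I₀ : Inst σ ℕ) (Su : Set (UID σ)) (Sf : Set (FD σ)) (q : CQ σ) : Prop :=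
  ∀ I : Inst σ ℕ, I₀ ⊆ I → satAllC I Su Sf → satCQ I q

/-- Finite open-world entailment: every finite superinstance of `I₀` satisfying the
constraints satisfies `q`. -/
def finEntails (I₀ : Inst σ ℕ) (Su : Set (UID σ)) (Sf : Set (FD σ)) (q : CQ σ) : Prop :=
  ∀ I : Inst σ ℕ, I₀ ⊆ I → I.Finite → satAllC I Su Sf → satCQ I q

/-- A (nontrivial) UID is finitely implied by the constraints: it holds in every finite
instance satisfying them. -/
def finImpUID (Su : Set (UID σ)) (Sf : Set (FD σ)) (τ : UID σ) : Prop :=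
  ∀ I : Inst σ ℕ, I.Finite → satAllC I Su Sf → satUID I τ

/-- A (nontrivial) FD is finitely implied by the constraints: it holds in every finite
instance satisfying them. -/
def finImpFD (Su : Set (UID σ)) (Sf : Set (FD σ)) (φ : FD σ) : Prop :=
  ∀ I : Inst σ ℕ, I.Finite → satAllC I Su Sf → satFD I φ

/-! ### Part A: finite covers of large girth -/

section Words
variable {S : Type}

/-- Reduced words of bounded length. -/
def RW (S : Type) (N : ℕ) : Type := {l : List S // l.IsChain (· ≠ ·) ∧ l.length ≤ N}

theorem RW.finite [Finite S] (N : ℕ) : Finite (RW S N) :=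
  Set.Finite.subset (List.finite_length_le S N) (fun _ h => h.2)

open Classical in
/-- The raw action of a letter on a word. -/
noncomputable def actL (N : ℕ) (s : S) (l : List S) : List S :=
  if l.head? = some s then l.tail else if l.length < N then s :: l else l

theorem isChain_cons_of {s : S} {l : List S} (h : l.IsChain (· ≠ ·)) (hs : l.head? ≠ some s) :
    (s :: l).IsChain (· ≠ ·) := by
  cases l with
  | nil => simp
  | cons a l =>
    rw [List.isChain_cons_cons]
    refine ⟨?_, h⟩
    rintro rfl
    simp at hs

theorem actL_mem (N : ℕ) (s : S) (l : List S) (h : l.IsChain (· ≠ ·) ∧ l.length ≤ N) :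
    (actL N s l).IsChain (· ≠ ·) ∧ (actL N s l).length ≤ N := by
  unfold actL
  split_ifs with h1 h2
  · refine ⟨h.1.tail, ?_⟩
    have := h.2
    simp; omega
  · exact ⟨isChain_cons_of h.1 h1, by simpa using h2⟩
  · exact h

theorem actL_actL (N : ℕ) (s : S) (l : List S) (h : l.IsChain (· ≠ ·) ∧ l.length ≤ N) :
    actL N s (actL N s l) = l := by
  by_cases h1 : l.head? = some s
  · cases l with
    | nil => simp at h1
    | cons a l =>
      simp at h1
      subst h1
      have h3 : l.head? ≠ some a := by
        cases l with
        | nil => simp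
        | cons b l =>
          have := h.1
          rw [List.isChain_cons_cons] at this
          simp
          exact fun e => this.1 e.symm
      have h4 : l.length < N := by have := h.2; simp at this; omega
      simp [actL, h3, h4]
  · by_cases h2 : l.length < N
    · simp [actL, h1, h2]
    · simp [actL, h1, h2]

/-- The permutation of words associated with a letter. -/
noncomputable def eP (N : ℕ) (s : S) : Equiv.Perm (RW S N) :=
  Function.Involutive.toPerm (fun l => ⟨actL N s l.1, actL_mem N s l.1 l.2⟩)
    (fun l => Subtype.ext (actL_actL N s l.1 l.2))

theorem eP_val (N : ℕ) (s : S) (l : RW S N) : (eP N s l).1 = actL N s l.1 := rfl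

theorem eP_mul_self (N : ℕ) (s : S) : eP N s * eP N s = 1 := by
  ext l
  exact congrArg (fun l : RW S N => l) (Subtype.ext (actL_actL N s l.1 l.2))

theorem eP_cancel (N : ℕ) (s : S) (g : Equiv.Perm (RW S N)) : eP N s * (eP N s * g) = g := by
  rw [← mul_assoc, eP_mul_self, one_mul]

/-- The empty word. -/
def rw0 (S : Type) (N : ℕ) : RW S N := ⟨[], by simp⟩

/-- The product of the letters of a word. -/
noncomputable def prodW (N : ℕ) : List S → Equiv.Perm (RW S N)
  | [] => 1
  | s :: l => eP N s * prodW N l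

theorem prodW_apply (N : ℕ) : ∀ l : List S, l.IsChain (· ≠ ·) → l.length ≤ N →
    (prodW N l (rw0 S N)).1 = l
  | [], _, _ => rfl
  | s :: l, h, hl => by
    have ih := prodW_apply N l h.tail (by simp at hl; omega)
    rw [prodW, Equiv.Perm.mul_apply, eP_val, ih]
    have h1 : l.head? ≠ some s := by
      cases l with
      | nil => simp
      | cons b l =>
        rw [List.isChain_cons_cons] at h
        simp
        exact fun e => h.1 e.symm
    have h2 : l.length < N := by simp at hl; omega
    simp [actL, h1, h2]

end Words

section Cover
variable {S X B : Type}

/-- Valid reduced paths from the base bag `b0` to a bag. -/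
inductive Pt (el : S → X) (bag : S → B) (Oc : S → Prop) (b0 : B) : List S → B → Prop
  | nil : Pt el bag Oc b0 [] b0
  | cons {w : List S} {s s' : S} : Pt el bag Oc b0 w (bag s) → w.head? ≠ some s → s' ≠ s →
      el s' = el s → Oc s → Oc s' → Pt el bag Oc b0 (s' :: s :: w) (bag s')

theorem Pt.chain {el : S → X} {bag : S → B} {Oc : S → Prop} {b0 b : B} {w : List S}
    (h : Pt el bag Oc b0 w b) : w.IsChain (· ≠ ·) := by
  induction h with
  | nil => simp
  | cons h1 h2 h3 _ _ _ ih =>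
    rw [List.isChain_cons_cons]
    exact ⟨h3, isChain_cons_of ih h2⟩

open Classical in
/-- The developing map along words. -/
noncomputable def dev (bag : S → B) (Good : ℕ → B → (S → ℕ) → Prop) (n : ℕ) (f0 : S → ℕ) :
    List S → (S → ℕ)
  | s' :: s :: w =>
    if h : ∃ f', Good (n - (w.length / 2 + 1)) (bag s') f' ∧ f' s' = dev bag Good n f0 w s
    then h.choose else f0
  | _ => f0

theorem dev_spec {el : S → X} {bag : S → B} {Oc : S → Prop} {Good : ℕ → B → (S → ℕ) → Prop} {n : ℕ}
    {f0 : S → ℕ} {b0 : B} (h0 : Good n b0 f0)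
    (hG2 : ∀ j f s s', Oc s → Oc s' → Good (j+1) (bag s) f → s' ≠ s → el s' = el s →
      ∃ f', Good j (bag s') f' ∧ f' s' = f s) {w : List S} {b : B} (h : Pt el bag Oc b0 w b) :
    w.length ≤ 2 * n → Good (n - w.length / 2) b (dev bag Good n f0 w) ∧
      ∀ s' s u, w = s' :: s :: u → dev bag Good n f0 w s' = dev bag Good n f0 u s := by
  induction h with
  | nil => intro _; exact ⟨by simpa [dev] using h0, by simp⟩
  | @cons w s s' h1 h2 h3 h4 h5 h6 ih =>
    intro hl
    simp at hl
    have ih' := (ih (by omega)).1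
    have e : n - w.length / 2 = (n - (w.length / 2 + 1)) + 1 := by omega
    rw [e] at ih'
    have hex := hG2 _ _ s s' h5 h6 ih' h3 h4
    have hd : dev bag Good n f0 (s' :: s :: w) = hex.choose := by
      rw [dev, dif_pos hex]
    refine ⟨?_, ?_⟩
    · rw [hd]
      have : (s' :: s :: w).length / 2 = w.length / 2 + 1 := by simp; omega
      rw [this]
      exact hex.choose_spec.1
    · rintro a b u he
      simp at he
      obtain ⟨rfl, rfl, rfl⟩ := he
      rw [hd]
      exact hex.choose_spec.2

/-- Every element at distance one from a bag. -/
theorem Pt.step {el : S → X} {bag : S → B} {Oc : S → Prop} {b0 : B} {N : ℕ}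
    {w : List S} {s s' : S} (h : Pt el bag Oc b0 w (bag s)) (hs : Oc s) (hs' : Oc s')
    (he : el s' = el s) (hne : s' ≠ s) :
    ∃ w', Pt el bag Oc b0 w' (bag s') ∧ w'.length ≤ w.length + 2 ∧
      prodW N w' = eP N s' * (eP N s * prodW N w) := by
  by_cases h1 : w.head? = some s
  · generalize hb : bag s = b at h
    cases h with
    | nil => simp at h1
    | @cons u t s'' g1 g2 g3 g4 g5 g6 =>
      simp at h1
      subst h1
      by_cases h2 : s' = t
      · subst h2
        refine ⟨u, g1, by simp; omega, ?_⟩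
        simp [prodW, eP_cancel]
      · refine ⟨s' :: t :: u, Pt.cons g1 g2 h2 (he.trans g4) g5 hs', by simp, ?_⟩
        simp [prodW, eP_cancel]
  · exact ⟨s' :: s :: w, Pt.cons h h1 hne he hs hs', by simp, rfl⟩

theorem cover {σ : Sig} [Finite S] (el : S → X) (bag : S → B) (WF : Set (Fact σ S))
    (Su : Set (UID σ)) (Sf : Set (FD σ)) (M : Inst σ ℕ)
    (n : ℕ) (Good : ℕ → B → (S → ℕ) → Prop)
    (hbag : ∀ F ∈ WF, ∀ i j, bag (F.2 i) = bag (F.2 j))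
    (hU : ∀ τ ∈ Su, ∀ s, occursAt WF τ.src s → ∃ s', el s' = el s ∧ occursAt WF τ.dst s')
    (hinj : ∀ p s s', occursAt WF p s → occursAt WF p s' → el s = el s' → s = s')
    (hFD : ∀ φ ∈ Sf, satFD WF φ)
    (hG1 : ∀ j F f, F ∈ WF → ∀ i, Good j (bag (F.2 i)) f → (⟨F.1, fun i => f (F.2 i)⟩ : Fact σ ℕ) ∈ M)
    (hG2 : ∀ j f s s', (∃ p, occursAt WF p s) → (∃ p, occursAt WF p s') → Good (j+1) (bag s) f →
      s' ≠ s → el s' = el s → ∃ f', Good j (bag s') f' ∧ f' s' = f s)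
    (hG3 : ∀ s, (∃ p, occursAt WF p s) → ∃ f, Good n (bag s) f)
    (q : CQ σ) (hq : q.atoms.length ≤ n) :
    ∃ (Y : Type) (J : Inst σ Y) (emb : S → Y), J.Finite ∧ (∀ τ ∈ Su, satUID J τ) ∧
      (∀ φ ∈ Sf, satFD J φ) ∧ (satCQ J q → satCQ M q) ∧
      (∀ F ∈ WF, (⟨F.1, fun i => emb (F.2 i)⟩ : Fact σ Y) ∈ J) ∧
      (∀ s s', emb s = emb s' → el s = el s') := by
  classical
  set N := 2 * n + 2 with hN
  let G := Equiv.Perm (RW S N)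
  have : Finite (RW S N) := RW.finite N
  have : Finite G := inferInstance
  let mk : Fact σ S × G → Fact σ (X × G) := fun z => ⟨z.1.1, fun i => (el (z.1.2 i), eP N (z.1.2 i) * z.2)⟩
  let J : Inst σ (X × G) := mk '' (WF ×ˢ Set.univ)
  have := σ.rel_fin
  refine ⟨X × G, J, fun s => (el s, eP N s), ?_, ?_, ?_, ?_, ?_, ?_⟩
  · exact (Set.toFinite _).image _
  · rintro τ hτ a ⟨t, ⟨⟨⟨R, f⟩, g⟩, ⟨hF, -⟩, hm⟩, rfl⟩
    simp only [mk] at hm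
    obtain ⟨h1, h2⟩ := Sigma.mk.inj hm
    subst h1
    obtain rfl := eq_of_heq h2
    obtain ⟨s', hs', f', hF', rfl⟩ := hU τ hτ (f τ.src.2) ⟨f, hF, rfl⟩
    refine ⟨_, ⟨⟨⟨τ.dst.1, f'⟩, eP N (f' τ.dst.2) * (eP N (f τ.src.2) * g)⟩, ⟨hF', trivial⟩, rfl⟩, ?_⟩
    exact Prod.ext hs' (eP_cancel N _ _)
  · rintro φ hφ t u ⟨⟨⟨R, f⟩, g⟩, ⟨hF, -⟩, hm⟩ ⟨⟨⟨R', f'⟩, g'⟩, ⟨hF', -⟩, hm'⟩ hag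
    simp only [mk] at hm hm'
    obtain ⟨h1, h2⟩ := Sigma.mk.inj hm
    subst h1
    obtain rfl := eq_of_heq h2
    obtain ⟨h1', h2'⟩ := Sigma.mk.inj hm'
    subst h1'
    obtain rfl := eq_of_heq h2'
    have key : ∀ i ∈ φ.lhs, f i = f' i := fun i hi =>
      hinj ⟨_, i⟩ _ _ ⟨f, hF, rfl⟩ ⟨f', hF', rfl⟩ (Prod.ext_iff.1 (hag i hi)).1
    have hr := hFD φ hφ f f' hF hF' key
    obtain ⟨l, hl⟩ := φ.lhs_nonempty
    have hg := (Prod.ext_iff.1 (hag l hl)).2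
    simp only [key l hl] at hg
    have hg' : g = g' := mul_left_cancel hg
    simp [hr, hg']
  · rintro ⟨h, hh⟩
    -- the facts chosen for each atom
    have hA : ∀ i : Fin q.atoms.length, ∃ (f : Fin (σ.ar (q.atoms.get i).1) → S) (g : G),
        (⟨(q.atoms.get i).1, f⟩ : Fact σ S) ∈ WF ∧
        ∀ j, h ((q.atoms.get i).2 j) = (el (f j), eP N (f j) * g) := by
      intro i
      obtain ⟨⟨⟨R, f⟩, g⟩, ⟨hF, -⟩, hm⟩ := hh (q.atoms.get i) (List.get_mem _ _)
      simp only [mk] at hm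
      obtain ⟨h1, h2⟩ := Sigma.mk.inj hm
      subst h1
      have h3 := eq_of_heq h2
      exact ⟨f, g, hF, fun j => (congrFun h3 j).symm⟩
    choose f g hF hfg using hA
    have oc : ∀ i j, ∃ p, occursAt WF p (f i j) := fun i j => ⟨⟨_, j⟩, f i, hF i, rfl⟩
    let z : ∀ i : Fin q.atoms.length, Fin (σ.ar (q.atoms.get i).1) := fun i => ⟨0, σ.ar_pos _⟩
    let bg : Fin q.atoms.length → B := fun i => bag (f i (z i))
    have hbg : ∀ i j, bag (f i j) = bg i := fun i j => hbag _ (hF i) j (z i)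
    let Gr : SimpleGraph (Fin q.atoms.length) :=
      SimpleGraph.fromRel (fun i i' => ∃ j j', (q.atoms.get i).2 j = (q.atoms.get i').2 j')
    let Oc : S → Prop := fun s => ∃ p, occursAt WF p s
    -- paths
    have hpath : ∀ i i' (p : Gr.Walk i i'), ∃ w, Pt el bag Oc (bg i) w (bg i') ∧
        w.length ≤ 2 * p.length ∧ g i' = prodW N w * g i := by
      intro i i' p
      induction hp : p.length generalizing i' with
      | zero =>
        have := SimpleGraph.Walk.eq_of_length_eq_zero hp
        subst this
        exact ⟨[], Pt.nil, by simp, by simp [prodW]⟩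
      | succ m ih =>
        have hnn : ¬ p.Nil := by
          intro hnil
          rw [← SimpleGraph.Walk.length_eq_zero_iff] at hnil
          omega
        obtain ⟨w, hw, hwl, hwg⟩ := ih _ p.dropLast (by
          have := p.length_dropLast_add_one hnn
          omega)
        have hadj := p.adj_penultimate hnn
        generalize p.penultimate = i1 at hw hwg hadj
        have hsh : ∃ j j', (q.atoms.get i1).2 j = (q.atoms.get i').2 j' := by
          have := hadj
          simp only [Gr, SimpleGraph.fromRel_adj] at this
          rcases this.2 with ⟨j, j', e⟩ | ⟨j, j', e⟩
          · exact ⟨j, j', e⟩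
          · exact ⟨j', j, e.symm⟩
        obtain ⟨j, j', e⟩ := hsh
        have e1 := hfg i1 j
        rw [e, hfg i' j'] at e1
        obtain ⟨e2, e3⟩ := Prod.ext_iff.1 e1
        simp only at e2 e3
        by_cases hs : f i' j' = f i1 j
        · rw [hs] at e3
          have e4 := mul_left_cancel e3
          refine ⟨w, ?_, by omega, by rw [e4, hwg]⟩
          rw [← hbg i' j', hs, hbg]
          exact hw
        · rw [← hbg i1 j] at hw
          obtain ⟨w', h1, h2, h3⟩ := hw.step (N := N) (oc i1 j) (oc i' j') e2 hs
          refine ⟨w', by rw [← hbg i' j']; exact h1, by omega, ?_⟩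
          rw [h3]
          have : g i' = eP N (f i' j') * (eP N (f i1 j) * g i1) := by
            rw [← e3, eP_cancel]
          rw [this, hwg]
          simp only [mul_assoc]
    -- base points
    let bs : Fin q.atoms.length → Fin q.atoms.length :=
      fun i => (Gr.connectedComponentMk i).out
    have hbs : ∀ i, Gr.Reachable (bs i) i := fun i =>
      SimpleGraph.ConnectedComponent.exact (Quot.out_eq (Gr.connectedComponentMk i))
    have hbs' : ∀ i i' j j', (q.atoms.get i).2 j = (q.atoms.get i').2 j' → bs i = bs i' := by
      intro i i' j j' e
      by_cases hi : i = i'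
      · rw [hi]
      · have : Gr.Adj i i' := by
          simp only [Gr, SimpleGraph.fromRel_adj]
          exact ⟨hi, Or.inl ⟨j, j', e⟩⟩
        simp only [bs, SimpleGraph.ConnectedComponent.sound this.reachable]
    have hw : ∀ i, ∃ w, Pt el bag Oc (bg (bs i)) w (bg i) ∧ w.length ≤ 2 * n ∧
        g i = prodW N w * g (bs i) := by
      intro i
      obtain ⟨p, hp⟩ := (hbs i).exists_isPath
      obtain ⟨w, h1, h2, h3⟩ := hpath _ _ p
      have := hp.length_lt
      simp at this
      exact ⟨w, h1, by omega, h3⟩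
    choose w hwP hwl hwg using hw
    have hf0 : ∀ i, ∃ f0, Good n (bg i) f0 := fun i => hG3 _ (oc i (z i))
    choose f0 hf0 using hf0
    let ev : Fin q.atoms.length → List S → ℕ := fun i l => match l with
      | [] => 0
      | s :: u => dev bag Good n (f0 i) u s
    have hidx : ∀ x, ∃ i : Fin q.atoms.length, ∃ j, (q.atoms.get i).2 j = x := by
      intro x
      obtain ⟨A, hA, j, hj⟩ := q.vars_occur x
      obtain ⟨i, rfl⟩ := List.get_of_mem hA
      exact ⟨i, j, hj⟩
    choose ix jx hix using hidx
    let val : Fin q.nv → ℕ := fun x =>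
      ev (bs (ix x)) (((h x).2 * (g (bs (ix x)))⁻¹) (rw0 S N)).1
    have hval : ∀ i j, val ((q.atoms.get i).2 j) = dev bag Good n (f0 (bs i)) (w i) (f i j) := by
      intro i j
      have hb : bs (ix ((q.atoms.get i).2 j)) = bs i := hbs' _ _ _ _ (hix _)
      simp only [val, hb]
      have e1 : (h ((q.atoms.get i).2 j)).2 * (g (bs i))⁻¹ = eP N (f i j) * prodW N (w i) := by
        rw [hfg i j]
        simp only
        rw [hwg i, ← mul_assoc]
        exact mul_inv_cancel_right _ _
      rw [e1, Equiv.Perm.mul_apply, eP_val, prodW_apply N _ (hwP i).chain (by have := hwl i; omega)]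
      by_cases h1 : (w i).head? = some (f i j)
      · have hspec := (dev_spec (hf0 (bs i)) hG2 (hwP i) (hwl i)).2
        have hPt := hwP i
        generalize w i = wi at h1 hspec hPt
        generalize bg i = b at hPt
        cases hPt with
        | nil => simp at h1
        | @cons u t s'' g1 g2 g3 g4 g5 g6 =>
          simp at h1
          rw [← h1, hspec _ _ _ rfl]
          simp [actL, ev]
      · have h2 : (w i).length < N := by have := hwl i; omega
        simp [actL, h1, h2, ev]
    refine ⟨val, fun A hA => ?_⟩
    obtain ⟨i, rfl⟩ := List.get_of_mem hA
    have hgood := (dev_spec (hf0 (bs i)) hG2 (hwP i) (hwl i)).1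
    have := hG1 _ _ _ (hF i) (z i) hgood
    simpa only [hval] using this
  · intro F hF
    exact ⟨(F, 1), ⟨hF, trivial⟩, by simp [mk]⟩
  · intro s s' e
    exact (Prod.ext_iff.1 e).1

end Cover

/-! ### Part B: types and simulations -/

/-- The abstract data extracted from the constraints and the infinite model. -/
structure Ctx (σ : Sig) where
  Ule : σ.Pos → σ.Pos → Prop
  Fl : ∀ R : σ.Rel, Fin (σ.ar R) → Fin (σ.ar R) → Prop
  rank : σ.Pos → ℕ
  rmax : ℕ
  M : Inst σ ℕ
  A : Type
  finA : Finite A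
  va : A → ℕ
  I0 : Inst σ A
  K0 : ℕ
  Ule_refl : ∀ p, Ule p p
  Ule_trans : ∀ p q r, Ule p q → Ule q r → Ule p r
  Fl_refl : ∀ R i, Fl R i i
  Fl_trans : ∀ R i j l, Fl R i j → Fl R j l → Fl R i l
  M_Ule : ∀ p q a, Ule p q → occursAt M p a → occursAt M q a
  I0_Fl : ∀ R i j (t u : Fin (σ.ar R) → A), Fl R i j → (⟨R, t⟩ : Fact σ A) ∈ I0 →
    (⟨R, u⟩ : Fact σ A) ∈ I0 → t i = u i → t j = u j
  rank_pos : ∀ p, 1 ≤ rank p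
  rank_le : ∀ p, rank p ≤ rmax
  Ule_rank : ∀ p q, Ule p q → rank p ≤ rank q
  Ule_rank_eq : ∀ p q, Ule p q → rank p = rank q → Ule q p
  Fl_rank : ∀ R r q, Fl R r q → rank ⟨R, q⟩ ≤ rank ⟨R, r⟩
  Fl_rank_eq : ∀ R r q, Fl R r q → rank ⟨R, q⟩ = rank ⟨R, r⟩ → Fl R q r
  I0_M : ∀ R (t : Fin (σ.ar R) → A), (⟨R, t⟩ : Fact σ A) ∈ I0 → (⟨R, fun i => va (t i)⟩ : Fact σ ℕ) ∈ M

/-- Types of elements. -/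
inductive Tm (σ : Sig) (A : Type)
  | base (a : A)
  | star
  | deep (x : σ.Pos)
  | child (u : Tm σ A) (R : σ.Rel) (q r : Fin (σ.ar R))

namespace Ctx
variable {σ : Sig} (C : Ctx σ)

theorem repU_ex : ∃ f : σ.Pos → σ.Pos, (∀ p, C.Ule p (f p) ∧ C.Ule (f p) p) ∧
    ∀ p q, C.Ule p q → C.Ule q p → f p = f q := by
  let s : Setoid σ.Pos := ⟨fun p q => C.Ule p q ∧ C.Ule q p, fun p => ⟨C.Ule_refl p, C.Ule_refl p⟩,
    fun h => ⟨h.2, h.1⟩, fun h g => ⟨C.Ule_trans _ _ _ h.1 g.1, C.Ule_trans _ _ _ g.2 h.2⟩⟩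
  refine ⟨fun p => (Quotient.mk s p).out, fun p => ?_, fun p q h1 h2 => ?_⟩
  · have := Quotient.exact (Quotient.out_eq (Quotient.mk s p))
    exact ⟨this.2, this.1⟩
  · have : Quotient.mk s p = Quotient.mk s q := Quotient.sound ⟨h1, h2⟩
    simp only [this]

theorem repD_ex (R : σ.Rel) : ∃ f : Fin (σ.ar R) → Fin (σ.ar R),
    (∀ p, C.Fl R p (f p) ∧ C.Fl R (f p) p) ∧
    ∀ p q, C.Fl R p q → C.Fl R q p → f p = f q := by
  let s : Setoid (Fin (σ.ar R)) := ⟨fun p q => C.Fl R p q ∧ C.Fl R q p,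
    fun p => ⟨C.Fl_refl R p, C.Fl_refl R p⟩,
    fun h => ⟨h.2, h.1⟩, fun h g => ⟨C.Fl_trans _ _ _ _ h.1 g.1, C.Fl_trans _ _ _ _ g.2 h.2⟩⟩
  refine ⟨fun p => (Quotient.mk s p).out, fun p => ?_, fun p q h1 h2 => ?_⟩
  · have := Quotient.exact (Quotient.out_eq (Quotient.mk s p))
    exact ⟨this.2, this.1⟩
  · have : Quotient.mk s p = Quotient.mk s q := Quotient.sound ⟨h1, h2⟩
    simp only [this]

noncomputable def repU : σ.Pos → σ.Pos := C.repU_ex.choose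
noncomputable def repD (R : σ.Rel) : Fin (σ.ar R) → Fin (σ.ar R) := (C.repD_ex R).choose

theorem repU_le (p) : C.Ule p (C.repU p) := (C.repU_ex.choose_spec.1 p).1
theorem repU_ge (p) : C.Ule (C.repU p) p := (C.repU_ex.choose_spec.1 p).2
theorem repU_eq {p q} (h : C.Ule p q) (h' : C.Ule q p) : C.repU p = C.repU q :=
  C.repU_ex.choose_spec.2 p q h h'
theorem repU_repU (p) : C.repU (C.repU p) = C.repU p := C.repU_eq (C.repU_ge p) (C.repU_le p)
theorem rank_repU (p) : C.rank (C.repU p) = C.rank p :=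
  le_antisymm (C.Ule_rank _ _ (C.repU_ge p)) (C.Ule_rank _ _ (C.repU_le p))
theorem repD_le (R p) : C.Fl R p (C.repD R p) := ((C.repD_ex R).choose_spec.1 p).1
theorem repD_ge (R p) : C.Fl R (C.repD R p) p := ((C.repD_ex R).choose_spec.1 p).2
theorem repD_eq {R p q} (h : C.Fl R p q) (h' : C.Fl R q p) : C.repD R p = C.repD R q :=
  (C.repD_ex R).choose_spec.2 p q h h'
theorem repD_repD (R p) : C.repD R (C.repD R p) = C.repD R p := C.repD_eq (C.repD_ge R p) (C.repD_le R p)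
theorem rank_repD (R p) : C.rank ⟨R, C.repD R p⟩ = C.rank ⟨R, p⟩ :=
  le_antisymm (C.Fl_rank _ _ _ (C.repD_le R p)) (C.Fl_rank _ _ _ (C.repD_ge R p))

abbrev T := Tm σ C.A

/-- The positions at which an element of the given type occurs. -/
def pos : C.T → σ.Pos → Prop
  | .base a, q => ∃ p, occursAt C.I0 p a ∧ C.Ule p q
  | .star, _ => False
  | .deep x, q => C.Ule x q
  | .child _ R _ r, p => C.Ule ⟨R, r⟩ p

/-- The positions at which an element of the given type has its own new fact. -/
def need : C.T → σ.Pos → Prop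
  | .base a, q => (∃ p, occursAt C.I0 p a ∧ C.Ule p q) ∧ ¬ occursAt C.I0 q a
  | .star, _ => False
  | .deep x, p => C.Ule x p ∧ (C.Ule p x → p.2 = C.repD p.1 p.2)
  | .child _ R _ r, p => C.Ule ⟨R, r⟩ p ∧ p ≠ ⟨R, r⟩

theorem need_pos {u : C.T} {p} (h : C.need u p) : C.pos u p := by
  cases u with
  | base a => exact h.1
  | star => exact h
  | deep x => exact h.1
  | child u R q r => exact h.1

theorem pos_up {u : C.T} {p q} (h : C.pos u p) (hq : C.Ule p q) : C.pos u q := by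
  cases u with
  | base a => obtain ⟨p', h1, h2⟩ := h; exact ⟨p', h1, C.Ule_trans _ _ _ h2 hq⟩
  | star => exact h
  | deep x => exact C.Ule_trans _ _ _ h hq
  | child u R q r => exact C.Ule_trans _ _ _ h hq

/-- The class of a type. -/
def cl : C.T → Option σ.Pos
  | .deep x => some x
  | .child _ R _ r => some ⟨R, r⟩
  | _ => none

theorem pos_of_cl {u : C.T} {c p} (h : C.cl u = some c) : C.pos u p ↔ C.Ule c p := by
  cases u <;> simp [cl] at h <;> subst h <;> rfl

/-- Reversible steps. -/
def Rv (u : C.T) (R : σ.Rel) (q r : Fin (σ.ar R)) : Prop :=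
  (∃ c, C.cl u = some c ∧ C.Ule c ⟨R, q⟩ ∧ C.Ule ⟨R, q⟩ c) ∧ C.Fl R q r ∧ C.Fl R r q

def k : ℕ := C.K0 + 2

open Classical in
/-- The reversible depth. -/
noncomputable def rd : C.T → ℕ
  | .deep _ => C.k
  | .child u R q r => if C.Rv u R q r then rd u + 1 else 0
  | _ => 0

open Classical in
noncomputable def lev : C.T → ℕ
  | .deep x => (C.k + 1) * C.rank x + C.k
  | .child u R q r => (C.k + 1) * C.rank ⟨R, r⟩ + C.rd (.child u R q r)
  | _ => 0

def trunc : ℕ → C.T → C.T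
  | 0, _ => .star
  | n + 1, .child u R q r => .child (trunc n u) R q r
  | _ + 1, u => u

open Classical in
/-- The type of the `r`-th element of a fact created for a type `u` at position `q`. -/
noncomputable def ch (u : C.T) (R : σ.Rel) (q r : Fin (σ.ar R)) : C.T :=
  if C.Fl R r q then
    if C.Rv u R q r ∧ C.k ≤ C.rd u + 1 then .deep (C.repU ⟨R, r⟩) else .child u R q r
  else .child (C.trunc (C.k - 1) u) R q r

open Classical in
noncomputable def cmp (u : C.T) (R : σ.Rel) (q j : Fin (σ.ar R)) : C.T :=
  if j = q then u else C.ch u R q j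

/-- Bounded simulation of types in the model. -/
def Sim : ℕ → C.T → ℕ → Prop
  | 0, τ, m => ∀ p, C.pos τ p → occursAt C.M p m
  | j + 1, τ, m => (∀ p, C.pos τ p → occursAt C.M p m) ∧
      match τ with
      | .base a => m = C.va a
      | .child u R q r => ∃ t, (⟨R, t⟩ : Fact σ ℕ) ∈ C.M ∧ t r = m ∧ Sim j u (t q)
      | _ => True

theorem Sim.occ {C : Ctx σ} {j : ℕ} {τ : C.T} {m : ℕ} (h : C.Sim j τ m) {p} (hp : C.pos τ p) : occursAt C.M p m := by
  cases j with
  | zero => exact h p hp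
  | succ j => exact h.1 p hp

theorem Sim.mono1 {C : Ctx σ} : ∀ {j : ℕ} {τ : C.T} {m : ℕ}, C.Sim (j+1) τ m → C.Sim j τ m
  | 0, _, _, h => h.1
  | j+1, .base _, _, h => h
  | j+1, .star, _, h => h
  | j+1, .deep _, _, h => h
  | j+1, .child u R q r, m, h => by
    obtain ⟨h1, t, h2, h3, h4⟩ := h
    exact ⟨h1, t, h2, h3, Sim.mono1 h4⟩

theorem pos_trunc {n} {u : C.T} {p} (h : C.pos (C.trunc n u) p) : C.pos u p := by
  cases n with
  | zero => exact h.elim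
  | succ n => cases u <;> exact h

theorem pos_trunc' {n} {u : C.T} {p} (h : C.pos u p) : C.pos (C.trunc (n+1) u) p := by
  cases u <;> exact h

theorem Sim.trunc {C : Ctx σ} : ∀ {j n : ℕ} {τ : C.T} {m : ℕ}, C.Sim j τ m → C.Sim j (C.trunc n τ) m
  | 0, _, _, _, h => fun p hp => h p (C.pos_trunc hp)
  | j+1, 0, _, _, h => ⟨fun p hp => hp.elim, trivial⟩
  | j+1, n+1, .base _, _, h => h
  | j+1, n+1, .star, _, h => h
  | j+1, n+1, .deep _, _, h => h
  | j+1, n+1, .child u R q r, m, h => by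
    obtain ⟨h1, t, h2, h3, h4⟩ := h
    exact ⟨h1, t, h2, h3, Sim.trunc h4⟩

theorem Sim.of_trunc {C : Ctx σ} : ∀ {j n : ℕ} {τ : C.T} {m : ℕ}, j < n → C.Sim j (C.trunc n τ) m → C.Sim j τ m
  | 0, n+1, _, _, _, h => fun p hp => h p (C.pos_trunc' hp)
  | j+1, n+1, .base _, _, _, h => h
  | j+1, n+1, .star, _, _, h => h
  | j+1, n+1, .deep _, _, _, h => h
  | j+1, n+1, .child u R q r, m, hj, h => by
    obtain ⟨h1, t, h2, h3, h4⟩ := h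
    exact ⟨h1, t, h2, h3, Sim.of_trunc (by omega) h4⟩

theorem Sim.of_cl {C : Ctx σ} : ∀ {j : ℕ} {u : C.T} {m : ℕ} {c}, C.cl u = some c → j ≤ C.rd u →
    occursAt C.M c m → C.Sim j u m
  | 0, u, m, c, hc, _, h => fun p hp => C.M_Ule c p m ((C.pos_of_cl hc).1 hp) h
  | j+1, .deep x, m, c, hc, _, h => ⟨fun p hp => C.M_Ule c p m ((C.pos_of_cl hc).1 hp) h, trivial⟩
  | j+1, .child u R q r, m, c, hc, hj, h => by
    refine ⟨fun p hp => C.M_Ule c p m ((C.pos_of_cl hc).1 hp) h, ?_⟩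
    simp only [cl, Option.some.injEq] at hc
    subst hc
    obtain ⟨t, ht, rfl⟩ := h
    refine ⟨t, ht, rfl, ?_⟩
    rw [rd] at hj
    split_ifs at hj with hR
    · obtain ⟨⟨c', h1, h2, h3⟩, -⟩ := hR
      exact Sim.of_cl h1 (by omega) (C.M_Ule _ _ _ h3 ⟨t, ht, rfl⟩)
    · omega

theorem pos_ch {u : C.T} {R q r p} : C.pos (C.ch u R q r) p ↔ C.Ule ⟨R, r⟩ p := by
  unfold ch
  split_ifs
  · exact ⟨fun h => C.Ule_trans _ _ _ (C.repU_le _) h, fun h => C.Ule_trans _ _ _ (C.repU_ge _) h⟩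
  · rfl
  · rfl

theorem Sim.fact {C : Ctx σ} {j : ℕ} {u : C.T} {R q} {t : Fin (σ.ar R) → ℕ} (ht : (⟨R, t⟩ : Fact σ ℕ) ∈ C.M)
    (h : C.Sim j u (t q)) (i) : C.Sim j (C.cmp u R q i) (t i) := by
  unfold cmp
  split_ifs with hi
  · rw [hi]; exact h
  · have h0 : ∀ p, C.pos (C.ch u R q i) p → occursAt C.M p (t i) := fun p hp =>
      C.M_Ule _ _ _ (C.pos_ch.1 hp) ⟨t, ht, rfl⟩
    cases j with
    | zero => exact h0
    | succ j =>
      refine ⟨h0, ?_⟩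
      unfold ch
      split_ifs
      · trivial
      · exact ⟨t, ht, rfl, h.mono1⟩
      · exact ⟨t, ht, rfl, h.mono1.trunc⟩

theorem Sim.down {C : Ctx σ} {j : ℕ} {u : C.T} {R q} {m : ℕ} (h : C.Sim j u m) (hp : C.pos u ⟨R, q⟩) :
    ∃ t, (⟨R, t⟩ : Fact σ ℕ) ∈ C.M ∧ t q = m ∧ ∀ i, C.Sim j (C.cmp u R q i) (t i) := by
  obtain ⟨t, ht, rfl⟩ := h.occ hp
  exact ⟨t, ht, rfl, fun i => Sim.fact ht h i⟩

theorem Sim.up {C : Ctx σ} {j : ℕ} {u : C.T} {R q r} {m : ℕ} (h : C.Sim (j+1) (C.ch u R q r) m)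
    (hj : j + 1 ≤ C.K0) :
    ∃ t, (⟨R, t⟩ : Fact σ ℕ) ∈ C.M ∧ t r = m ∧ ∀ i, C.Sim j (C.cmp u R q i) (t i) := by
  have hoc : occursAt C.M ⟨R, r⟩ m := h.occ (C.pos_ch.2 (C.Ule_refl _))
  have hk : C.k = C.K0 + 2 := rfl
  unfold ch at h
  split_ifs at h with h1 h2
  · obtain ⟨t, ht, rfl⟩ := hoc
    refine ⟨t, ht, rfl, fun i => Sim.fact ht ?_ i⟩
    obtain ⟨⟨⟨c', g1, g2, g3⟩, -⟩, h4⟩ := h2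
    exact Sim.of_cl g1 (by omega) (C.M_Ule _ _ _ g3 ⟨t, ht, rfl⟩)
  · obtain ⟨-, t, ht, e, h4⟩ := h
    exact ⟨t, ht, e, fun i => Sim.fact ht h4 i⟩
  · obtain ⟨-, t, ht, e, h4⟩ := h
    exact ⟨t, ht, e, fun i => Sim.fact ht (Sim.of_trunc (by omega) h4) i⟩

/-- The depth of a type. -/
def depth : C.T → ℕ
  | .child u _ _ _ => depth u + 1
  | _ => 0

theorem depth_trunc : ∀ (n : ℕ) (u : C.T), C.depth (C.trunc n u) ≤ n
  | 0, _ => by simp [trunc, depth]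
  | n+1, .child u R q r => by
    have := depth_trunc n u
    simp [trunc, depth]; omega
  | n+1, .base _ => by simp [trunc, depth]
  | n+1, .star => by simp [trunc, depth]
  | n+1, .deep _ => by simp [trunc, depth]

theorem depth_finite (n : ℕ) : {t : C.T | C.depth t ≤ n}.Finite := by
  have := σ.rel_fin
  have := C.finA
  have h0 : (Set.range (Tm.base : C.A → C.T) ∪ {Tm.star} ∪ Set.range (Tm.deep : σ.Pos → C.T)).Finite :=
    ((Set.finite_range _).union (Set.finite_singleton _)).union (Set.finite_range _)
  induction n with
  | zero =>
    refine h0.subset fun t ht => ?_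
    cases t with
    | base a => exact Or.inl (Or.inl ⟨a, rfl⟩)
    | star => exact Or.inl (Or.inr rfl)
    | deep x => exact Or.inr ⟨x, rfl⟩
    | child u R q r => simp [depth] at ht
  | succ n ih =>
    have h1 : ((fun z : C.T × (Σ R : σ.Rel, Fin (σ.ar R) × Fin (σ.ar R)) => (Tm.child z.1 z.2.1 z.2.2.1 z.2.2.2 : C.T)) ''
        ({t : C.T | C.depth t ≤ n} ×ˢ Set.univ)).Finite := (ih.prod (Set.toFinite _)).image _
    refine (h0.union h1).subset fun t ht => ?_
    cases t with
    | base a => exact Or.inl (Or.inl (Or.inl ⟨a, rfl⟩))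
    | star => exact Or.inl (Or.inl (Or.inr rfl))
    | deep x => exact Or.inl (Or.inr ⟨x, rfl⟩)
    | child u R q r =>
      refine Or.inr ⟨(u, ⟨R, q, r⟩), ⟨?_, trivial⟩, rfl⟩
      simp [depth] at ht ⊢; omega

/-- Validity of types. -/
structure Valid (t : C.T) : Prop where
  depth : C.depth t ≤ C.k + C.lev t
  rd : C.rd t < C.k ∨ ∃ x, t = .deep x
  dp : ∀ x, t = .deep x → C.repU x = x
  sim : ∃ m, C.Sim C.K0 t m

theorem rd_le {t : C.T} (h : C.Valid t) : C.rd t ≤ C.k := by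
  rcases h.rd with h | ⟨x, rfl⟩
  · omega
  · simp [Ctx.rd]

def lmax : ℕ := (C.k + 1) * C.rmax + C.k

theorem lev_cl {t : C.T} {c} (hc : C.cl t = some c) : C.lev t = (C.k + 1) * C.rank c + C.rd t := by
  cases t <;> simp [cl] at hc <;> subst hc <;> simp [lev, Ctx.rd]

theorem lev_ncl {t : C.T} (hc : C.cl t = none) : C.lev t = 0 := by
  cases t <;> simp [cl] at hc <;> simp [lev]

theorem lev_le {t : C.T} (h : C.Valid t) : C.lev t ≤ C.lmax := by
  have := C.rd_le h
  cases hc : C.cl t with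
  | none => rw [C.lev_ncl hc]; omega
  | some c =>
    rw [C.lev_cl hc]
    exact add_le_add (Nat.mul_le_mul_left _ (C.rank_le c)) this

/-- Level of a type versus ranks of its positions. -/
theorem lev_lt_of_rank {u : C.T} (h : C.Valid u) {p} (hp : C.pos u p) {r : ℕ} (hr : C.rank p ≤ r)
    (hnR : ∀ c, C.cl u = some c → C.Ule p c → C.rank p = r → False) : C.lev u < (C.k + 1) * r := by
  have h1 := C.rank_pos p
  cases hc : C.cl u with
  | none =>
    rw [C.lev_ncl hc]
    exact Nat.mul_pos (by omega) (by omega)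
  | some c =>
    have hcp := (C.pos_of_cl hc).1 hp
    have h2 := C.Ule_rank _ _ hcp
    rw [C.lev_cl hc]
    have h3 := C.rd_le h
    have h4 : C.rank c < r := by
      rcases lt_or_eq_of_le (h2.trans hr) with h5 | h5
      · exact h5
      · exact (hnR c hc (C.Ule_rank_eq _ _ hcp (by omega)) (by omega)).elim
    have : (C.k + 1) * (C.rank c + 1) ≤ (C.k + 1) * r := Nat.mul_le_mul_left _ h4
    nlinarith

/-- Strong children have larger level. -/
theorem lev_strong {u : C.T} (h : C.Valid u) {R q r} (hp : C.pos u ⟨R, q⟩) (hs : C.Fl R r q) :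
    C.lev u + 1 ≤ C.lev (.child u R q r) := by
  by_cases hR : C.Rv u R q r
  · obtain ⟨⟨c, h1, h2, h3⟩, h4, h5⟩ := hR
    have hR : C.Rv u R q r := ⟨⟨c, h1, h2, h3⟩, h4, h5⟩
    rw [C.lev_cl h1, lev, Ctx.rd, if_pos hR]
    have e1 := C.Ule_rank _ _ h2
    have e2 := C.Fl_rank _ _ _ h5
    have := Nat.mul_le_mul_left (C.k+1) (e1.trans e2)
    omega
  · have := C.lev_lt_of_rank h hp (C.Fl_rank _ _ _ hs) (fun c hc h1 h2 =>
      hR ⟨⟨c, hc, (C.pos_of_cl hc).1 hp, h1⟩, C.Fl_rank_eq _ _ _ hs h2, hs⟩)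
    rw [lev]
    omega

theorem valid_cmp {u : C.T} (h : C.Valid u) {R q} (hp : C.pos u ⟨R, q⟩) (r) : C.Valid (C.cmp u R q r) := by
  obtain ⟨m, hm⟩ := h.sim
  obtain ⟨t, -, -, hs⟩ := hm.down hp
  have hs := hs r
  have hk : C.k = C.K0 + 2 := rfl
  unfold cmp at hs ⊢
  split_ifs at hs ⊢ with h1
  · exact h
  · unfold ch at hs ⊢
    split_ifs at hs ⊢ with h2 h3
    · refine ⟨by simp [Ctx.depth], Or.inr ⟨_, rfl⟩, ?_, _, hs⟩
      rintro x hx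
      cases hx
      exact C.repU_repU _
    · refine ⟨?_, Or.inl ?_, by simp, _, hs⟩
      · have := C.lev_strong h hp h2
        have := h.depth
        simp only [Ctx.depth]
        omega
      · rw [Ctx.rd]
        split_ifs with h4
        · by_contra h5
          exact h3 ⟨h4, by omega⟩
        · omega
    · refine ⟨?_, Or.inl ?_, by simp, _, hs⟩
      · have := C.depth_trunc (C.k - 1) u
        simp only [Ctx.depth]
        omega
      · rw [Ctx.rd, if_neg (fun h => h2 h.2.2)]
        omega

theorem valid_finite : {t : C.T | C.Valid t}.Finite :=
  (C.depth_finite (C.k + C.lmax)).subset fun t ht => by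
    have := ht.depth
    have := C.lev_le ht
    simp only [Set.mem_ofPred_eq]
    omega

theorem valid_base (a : C.A) : C.Valid (.base a) := by
  refine ⟨by simp [Ctx.depth], Or.inl (by simp [Ctx.rd, k]), by simp, C.va a, ?_⟩
  have h0 : ∀ p, C.pos (.base a) p → occursAt C.M p (C.va a) := by
    rintro p ⟨q, ⟨t, ht, rfl⟩, h2⟩
    exact C.M_Ule _ _ _ h2 ⟨_, C.I0_M _ _ ht, rfl⟩
  cases C.K0 with
  | zero => exact h0
  | succ j => exact ⟨h0, rfl⟩

theorem sim_base (a : C.A) (j) : C.Sim j (.base a) (C.va a) := by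
  have h0 : ∀ p, C.pos (.base a) p → occursAt C.M p (C.va a) := by
    rintro p ⟨q, ⟨t, ht, rfl⟩, h2⟩
    exact C.M_Ule _ _ _ h2 ⟨_, C.I0_M _ _ ht, rfl⟩
  cases j with
  | zero => exact h0
  | succ j => exact ⟨h0, rfl⟩

/-- If some valid type sits at a position of `R`, all deep types at positions of `R` are valid. -/
theorem valid_deep {u : C.T} (h : C.Valid u) {R j} (hp : C.pos u ⟨R, j⟩) (i) :
    C.Valid (.deep (C.repU ⟨R, i⟩)) := by
  obtain ⟨m, hm⟩ := h.sim
  obtain ⟨t, ht, -⟩ := hm.occ hp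
  refine ⟨by simp [Ctx.depth], Or.inr ⟨_, rfl⟩, ?_, t i, ?_⟩
  · rintro x hx
    cases hx
    exact C.repU_repU _
  · refine Sim.of_cl (c := C.repU ⟨R, i⟩) rfl ?_ (C.M_Ule _ _ _ (C.repU_le _) ⟨t, ht, rfl⟩)
    simp [Ctx.rd, k]

end Ctx

/-! ### Part C: counting -/

theorem exists_fixpoint {I : Type} (Φ : (I → ℕ) → (I → ℕ)) (hm : Monotone Φ) (B : I → ℕ) (hB : Φ B ≤ B) :
    ∃ Z, Z ≤ B ∧ Φ Z = Z := by
  let Z : I → ℕ := fun i => sInf {n | ∃ Y : I → ℕ, Φ Y ≤ Y ∧ Y i = n}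
  have hle : ∀ Y, Φ Y ≤ Y → Z ≤ Y := fun Y hY i => Nat.sInf_le ⟨Y, hY, rfl⟩
  have h1 : Φ Z ≤ Z := by
    intro i
    obtain ⟨Y, hY, e⟩ := Nat.sInf_mem (s := {n | ∃ Y : I → ℕ, Φ Y ≤ Y ∧ Y i = n}) ⟨_, B, hB, rfl⟩
    exact ((hm (hle Y hY) i).trans (hY i)).trans e.le
  exact ⟨Z, hle B hB, le_antisymm h1 (hle _ (hm h1))⟩

noncomputable instance relFintype (σ : Sig) : Fintype σ.Rel :=
  have := σ.rel_fin
  Fintype.ofFinite _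

noncomputable instance posDec (σ : Sig) : DecidableEq σ.Pos := Classical.decEq _

namespace Ctx
variable {σ : Sig} (C : Ctx σ)

noncomputable instance : Fintype C.A :=
  have := C.finA
  Fintype.ofFinite _

noncomputable def Ts : Finset C.T := C.valid_finite.toFinset

theorem mem_Ts {u : C.T} : u ∈ C.Ts ↔ C.Valid u := by simp [Ts]

noncomputable def cc : ℕ := 1 + Fintype.card σ.Pos *
  (C.Ts.card + Fintype.card C.A + C.Ts.card * Fintype.card σ.Pos)

noncomputable def av : ℕ := C.cc ^ (C.lmax + 1)

abbrev Vec : Type := σ.Pos → Fin (C.av + 1)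

def masked (R : σ.Rel) (q j : Fin (σ.ar R)) (c : σ.Pos) : Prop :=
  ∃ c', c = ⟨R, c'⟩ ∧ ¬ C.Fl R c' q ∧ C.Fl R c' j

open Classical in
noncomputable def restr (R : σ.Rel) (q j : Fin (σ.ar R)) (v : C.Vec) : C.Vec :=
  fun c => if C.masked R q j c then 0 else v c

open Classical in
noncomputable def VV (N : ℕ) : Finset C.Vec :=
  Finset.univ.filter fun v => (Fintype.equivFin C.Vec v).val < N

theorem VV_mono {N N' : ℕ} (h : N ≤ N') : C.VV N ⊆ C.VV N' := by
  intro v hv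
  simp only [VV, Finset.mem_filter, Finset.mem_univ, true_and] at hv ⊢
  omega

theorem VV_card_le (N : ℕ) : (C.VV N).card ≤ N := by
  have : (C.VV N).card ≤ (Finset.range N).card := by
    refine Finset.card_le_card_of_injOn (fun v => (Fintype.equivFin C.Vec v).val) ?_ ?_
    · intro v hv
      simpa [VV] using hv
    · intro v _ w _ h
      exact (Fintype.equivFin C.Vec).injective (Fin.ext h)
  simpa using this

theorem VV_card {N : ℕ} (h : N ≤ Fintype.card C.Vec) : (C.VV N).card = N := by
  refine le_antisymm (C.VV_card_le N) ?_
  have : (Finset.univ : Finset (Fin N)).card ≤ (C.VV N).card := by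
    refine Finset.card_le_card_of_injOn (fun i => (Fintype.equivFin C.Vec).symm ⟨i.1, by omega⟩) ?_ ?_
    · intro v hv
      simp [VV]
    · intro v _ w _ h
      have := (Fintype.equivFin C.Vec).symm.injective h
      simp at this
      exact Fin.ext this
  simpa using this

open Classical in
noncomputable def im (N : ℕ) (R : σ.Rel) (q j : Fin (σ.ar R)) : Finset C.Vec :=
  (C.VV N).image (C.restr R q j)

theorem im_mono {N N' : ℕ} (h : N ≤ N') (R q j) : (C.im N R q j).card ≤ (C.im N' R q j).card :=
  Finset.card_le_card (Finset.image_subset_image (C.VV_mono h))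

theorem im_le (N : ℕ) (R q j) : (C.im N R q j).card ≤ N :=
  Finset.card_image_le.trans (C.VV_card_le N)

theorem im_zero (R q j) : C.im 0 R q j = ∅ := by simp [im, VV]

theorem restr_strong {R q j} (h : C.Fl R j q) (v : C.Vec) : C.restr R q j v = v := by
  funext c
  rw [restr, if_neg]
  rintro ⟨c', rfl, h1, h2⟩
  exact h1 (C.Fl_trans _ _ _ _ h2 h)

theorem im_strong {N R q j} (h : C.Fl R j q) (hN : N ≤ Fintype.card C.Vec) : (C.im N R q j).card = N := by
  have : C.restr R q j = id := funext (C.restr_strong h)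
  rw [im, this, Finset.image_id, C.VV_card hN]

theorem im_congr {R q j j'} (h : C.Fl R j j') (h' : C.Fl R j' j) (N) : C.im N R q j = C.im N R q j' := by
  have : C.restr R q j = C.restr R q j' := by
    funext v c
    have : C.masked R q j c ↔ C.masked R q j' c := by
      constructor
      · rintro ⟨c', rfl, h1, h2⟩
        exact ⟨c', rfl, h1, C.Fl_trans _ _ _ _ h2 h⟩
      · rintro ⟨c', rfl, h1, h2⟩
        exact ⟨c', rfl, h1, C.Fl_trans _ _ _ _ h2 h'⟩
    by_cases hm : C.masked R q j c
    · rw [restr, restr, if_pos hm, if_pos (this.1 hm)]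
    · rw [restr, restr, if_neg hm, if_neg (fun h => hm (this.2 h))]
  rw [im, im, this]

noncomputable def Bd : ℕ := (C.av + 1) ^ (Fintype.card σ.Pos - 1)

theorem Bd_pos : 1 ≤ C.Bd := Nat.one_le_pow _ _ (by omega)

theorem im_weak {N R q j} (h : ¬ C.Fl R j q) : (C.im N R q j).card ≤ C.Bd := by
  classical
  let c0 : σ.Pos := ⟨R, j⟩
  have h0 : ∀ w ∈ C.im N R q j, w c0 = 0 := by
    intro w hw
    simp only [im, Finset.mem_image] at hw
    obtain ⟨v, -, rfl⟩ := hw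
    rw [restr, if_pos]
    exact ⟨j, rfl, h, C.Fl_refl _ _⟩
  have : (C.im N R q j).card ≤ (Finset.univ : Finset ({x : σ.Pos // x ≠ c0} → Fin (C.av + 1))).card := by
    refine Finset.card_le_card_of_injOn (fun w x => w x.1) (by intro _ _; simp) ?_
    intro w hw w' hw' e
    funext c
    by_cases hc : c = c0
    · rw [hc, h0 w hw, h0 w' hw']
    · exact congrFun e ⟨c, hc⟩
  refine this.trans ?_
  simp [Bd]

theorem Vec_card [Nonempty σ.Pos] : Fintype.card C.Vec = (C.av + 1) * C.Bd := by
  have h : 1 ≤ Fintype.card σ.Pos := Fintype.card_pos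
  rw [Bd, ← pow_succ', Fintype.card_fun, Fintype.card_fin]
  congr 1
  omega

abbrev Ix : Type := C.T ⊕ C.T × σ.Pos

variable (Z : C.Ix → ℕ)

noncomputable def nn (p : σ.Pos) (b : C.T × Fin (σ.ar p.1)) : ℕ :=
  (C.im (Z (.inr (b.1, ⟨p.1, b.2⟩))) p.1 b.2 p.2).card

noncomputable def prs (p : σ.Pos) : Finset (C.T × Fin (σ.ar p.1)) := C.Ts ×ˢ Finset.univ

open Classical in
noncomputable def sl (p : σ.Pos) (u' : C.T) : ℕ :=
  ∑ b ∈ (C.prs p).filter (fun b => C.cmp b.1 p.1 b.2 p.2 = u'), C.nn Z p b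

noncomputable def bst (p : σ.Pos) : C.T × Fin (σ.ar p.1) :=
  (.deep (C.repU ⟨p.1, C.repD p.1 p.2⟩), C.repD p.1 p.2)

open Classical in
noncomputable def i0 (p : σ.Pos) : ℕ := (Finset.univ.filter fun a => occursAt C.I0 p a).card

open Classical in
noncomputable def ss (p : σ.Pos) : ℕ := C.i0 p + ∑ b ∈ (C.prs p).erase (C.bst p), C.nn Z p b

open Classical in
noncomputable def aa (p : σ.Pos) : ℕ :=
  ∑ u ∈ C.Ts.filter (fun u => C.pos u p ∧ u ≠ .deep (C.repU p)), Z (.inl u)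

open Classical in
noncomputable def oth (p : σ.Pos) : ℕ :=
  ∑ p' ∈ (Finset.univ.filter fun p' => C.rank p' = C.rank p).erase p, (C.aa Z p' + C.ss Z p')

open Classical in
noncomputable def Nr (n : ℕ) : ℕ :=
  ∑ p' ∈ Finset.univ.filter fun p' => C.rank p' = n, (C.aa Z p' + C.ss Z p')

theorem Nr_eq (p) : C.aa Z p + C.ss Z p + C.oth Z p = C.Nr Z (C.rank p) := by
  classical
  rw [Nr, oth]
  exact Finset.add_sum_erase _ (fun p' => C.aa Z p' + C.ss Z p') (by simp)

open Classical in
noncomputable def Phi : C.Ix → ℕ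
  | .inl (.base _) => 1
  | .inl .star => 0
  | .inl (.deep x) => C.ss Z x + C.oth Z x
  | .inl (.child u R q r) => C.sl Z ⟨R, r⟩ (.child u R q r)
  | .inr (u, p) => if u ∈ C.Ts ∧ C.need u p then
      (if u = .deep (C.repU p) then C.aa Z p + C.oth Z p else Z (.inl u)) else 0

theorem Phi_mono : Monotone C.Phi := by
  intro Z Z' h
  have hn : ∀ p b, C.nn Z p b ≤ C.nn Z' p b := fun p b => C.im_mono (h _) _ _ _
  have hs : ∀ p u, C.sl Z p u ≤ C.sl Z' p u := fun p u => Finset.sum_le_sum fun b _ => hn p b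
  have hss : ∀ p, C.ss Z p ≤ C.ss Z' p := fun p => add_le_add le_rfl (Finset.sum_le_sum fun b _ => hn p b)
  have ha : ∀ p, C.aa Z p ≤ C.aa Z' p := fun p => Finset.sum_le_sum fun b _ => h _
  have ho : ∀ p, C.oth Z p ≤ C.oth Z' p := fun p => Finset.sum_le_sum fun b _ => add_le_add (ha _) (hss _)
  intro i
  match i with
  | .inl (.base _) => exact le_rfl
  | .inl .star => exact le_rfl
  | .inl (.deep x) => exact add_le_add (hss x) (ho x)
  | .inl (.child u R q r) => exact hs _ _
  | .inr (u, p) =>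
    simp only [Phi]
    split_ifs
    · exact add_le_add (ha p) (ho p)
    · exact h _
    · exact le_rfl

open Classical in
noncomputable def BB : C.Ix → ℕ
  | .inl u => C.cc ^ (C.lev u + 1) * C.Bd
  | .inr (u, p) => if u ∈ C.Ts ∧ C.need u p then C.cc ^ (C.lev u + 1) * C.Bd else 0

theorem cc_pos : 1 ≤ C.cc := by simp [cc]

theorem pw_le {l L : ℕ} (h : l ≤ L) : C.cc ^ l * C.Bd ≤ C.cc ^ L * C.Bd :=
  Nat.mul_le_mul_right _ (Nat.pow_le_pow_right C.cc_pos h)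

theorem one_le_pw (L : ℕ) : 1 ≤ C.cc ^ L * C.Bd :=
  Nat.mul_pos (Nat.pow_pos C.cc_pos) C.Bd_pos

theorem prs_card (p : σ.Pos) : (C.prs p).card ≤ C.Ts.card * Fintype.card σ.Pos := by
  rw [prs, Finset.card_product]
  refine Nat.mul_le_mul_left _ ?_
  rw [Finset.card_univ]
  exact Fintype.card_le_of_injective (fun i => (⟨p.1, i⟩ : σ.Pos)) (fun i j h => by simpa using h)

theorem mem_prs {p : σ.Pos} {b} : b ∈ C.prs p ↔ C.Valid b.1 := by simp [prs, mem_Ts]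

theorem nn_BB_le {p : σ.Pos} {b : C.T × Fin (σ.ar p.1)} (L : ℕ)
    (h : C.need b.1 ⟨p.1, b.2⟩ → C.Fl p.1 p.2 b.2 → C.lev b.1 + 1 ≤ L) :
    C.nn C.BB p b ≤ C.cc ^ L * C.Bd := by
  unfold nn
  by_cases hn : b.1 ∈ C.Ts ∧ C.need b.1 ⟨p.1, b.2⟩
  · by_cases hf : C.Fl p.1 p.2 b.2
    · refine (C.im_le _ _ _ _).trans ?_
      simp only [BB, hn, and_self, if_true]
      exact C.pw_le (h hn.2 hf)
    · refine (C.im_weak hf).trans ?_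
      exact Nat.le_mul_of_pos_left _ (Nat.pow_pos C.cc_pos)
  · have : C.BB (.inr (b.1, ⟨p.1, b.2⟩)) = 0 := by simp only [BB, if_neg hn]
    rw [this, im_zero]
    simp

theorem sum_le_card {ι : Type} {s : Finset ι} {f : ι → ℕ} {m n : ℕ} (hm : s.card ≤ m) (h : ∀ i ∈ s, f i ≤ n) :
    ∑ i ∈ s, f i ≤ m * n := by
  have := Finset.sum_le_card_nsmul s f n h
  rw [smul_eq_mul] at this
  exact this.trans (Nat.mul_le_mul_right _ hm)

theorem lev_lt_deep {u : C.T} (h : C.Valid u) {p} (hp : C.pos u p) {r : ℕ} (hr : C.rank p ≤ r)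
    (hnR : ∀ x, u = .deep x → C.Ule p x → C.rank p = r → False) : C.lev u + 1 ≤ (C.k + 1) * r + C.k := by
  by_cases hd : ∃ x, u = .deep x
  · obtain ⟨x, rfl⟩ := hd
    have hk : C.k = C.K0 + 2 := rfl
    have := C.lev_lt_of_rank h hp hr (fun c hc h1 h2 => hnR x rfl (by
      simp [cl] at hc; exact hc ▸ h1) h2)
    omega
  · have h1 : C.rd u < C.k := h.rd.resolve_right hd
    cases hc : C.cl u with
    | none => rw [C.lev_ncl hc]; have : C.k = C.K0 + 2 := rfl; omega
    | some c =>
      rw [C.lev_cl hc]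
      have := Nat.mul_le_mul_left (C.k+1) ((C.Ule_rank _ _ ((C.pos_of_cl hc).1 hp)).trans hr)
      omega

theorem ss_BB_le (p : σ.Pos) : C.ss C.BB p ≤ (Fintype.card C.A + C.Ts.card * Fintype.card σ.Pos) *
    (C.cc ^ ((C.k + 1) * C.rank p + C.k) * C.Bd) := by
  classical
  rw [add_mul]
  refine add_le_add ?_ ?_
  · have h1 : C.i0 p ≤ Fintype.card C.A := Finset.card_le_univ _
    exact h1.trans (Nat.le_mul_of_pos_right _ (C.one_le_pw _))
  · refine sum_le_card ((Finset.card_erase_le).trans (C.prs_card p)) ?_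
    intro b hb
    rw [Finset.mem_erase, mem_prs] at hb
    refine C.nn_BB_le _ fun hn hf => ?_
    refine C.lev_lt_deep hb.2 (C.need_pos hn) (C.Fl_rank _ _ _ hf) ?_
    intro x hx h1 h2
    have hf' := C.Fl_rank_eq _ _ _ hf h2
    rw [hx] at hn
    have h3 : b.2 = C.repD p.1 b.2 := hn.2 h1
    have h4 : C.repD p.1 p.2 = b.2 := by rw [h3]; exact C.repD_eq hf hf'
    have h5 : C.repU x = x := hb.2.dp x hx
    apply hb.1
    rw [bst, h4, C.repU_eq h1 hn.1, h5, ← hx]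

theorem aa_BB_le (p : σ.Pos) : C.aa C.BB p ≤ C.Ts.card * (C.cc ^ ((C.k + 1) * C.rank p + C.k) * C.Bd) := by
  classical
  refine sum_le_card (Finset.card_filter_le _ _) ?_
  intro u hu
  rw [Finset.mem_filter, mem_Ts] at hu
  obtain ⟨h1, h2, h3⟩ := hu
  refine C.pw_le (C.lev_lt_deep h1 h2 le_rfl ?_)
  rintro x rfl h4 -
  apply h3
  rw [C.repU_eq h4 h2, h1.dp x rfl]

theorem Nr_BB_le (p : σ.Pos) : C.Nr C.BB (C.rank p) ≤ C.cc ^ ((C.k + 1) * C.rank p + C.k + 1) * C.Bd := by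
  classical
  have : C.Nr C.BB (C.rank p) ≤ Fintype.card σ.Pos *
    ((C.Ts.card + (Fintype.card C.A + C.Ts.card * Fintype.card σ.Pos)) *
    (C.cc ^ ((C.k + 1) * C.rank p + C.k) * C.Bd)) := by
    refine sum_le_card (Finset.card_le_univ _) ?_
    intro p' hp'
    have e : C.rank p' = C.rank p := by simpa using hp'
    rw [add_mul, ← e]
    exact add_le_add (C.aa_BB_le p') (C.ss_BB_le p')
  refine this.trans ?_
  rw [pow_succ', mul_assoc, ← mul_assoc]
  refine Nat.mul_le_mul_right _ ?_
  rw [cc, add_assoc]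
  omega

theorem sl_BB_le (u R q r) : C.sl C.BB ⟨R, r⟩ (.child u R q r) ≤ C.BB (.inl (.child u R q r)) := by
  classical
  have : C.sl C.BB ⟨R, r⟩ (.child u R q r) ≤ (C.Ts.card * Fintype.card σ.Pos) *
      (C.cc ^ (C.lev (.child u R q r)) * C.Bd) := by
    refine sum_le_card ((Finset.card_filter_le _ _).trans (C.prs_card _)) ?_
    intro b hb
    rw [Finset.mem_filter, mem_prs] at hb
    obtain ⟨hv, hb⟩ := hb
    refine C.nn_BB_le _ fun hn hf => ?_
    simp only at hb hn hf
    unfold cmp at hb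
    split_ifs at hb with h1
    · rw [hb] at hn
      exact (hn.2 (by rw [h1])).elim
    · unfold ch at hb
      rw [if_pos hf] at hb
      split_ifs at hb
      rw [← hb]
      exact C.lev_strong hv (C.need_pos hn) hf
  refine this.trans ?_
  rw [BB, pow_succ', mul_assoc C.cc]
  refine Nat.mul_le_mul_right _ ?_
  have h1 : 1 ≤ Fintype.card σ.Pos := Fintype.card_pos_iff.2 ⟨⟨R, r⟩⟩
  have := Nat.mul_le_mul_right (C.Ts.card + Fintype.card C.A + C.Ts.card * Fintype.card σ.Pos) h1
  rw [cc]
  omega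

theorem Phi_BB : C.Phi C.BB ≤ C.BB := by
  intro i
  match i with
  | .inl (.base _) => exact C.one_le_pw _
  | .inl .star => exact Nat.zero_le _
  | .inl (.deep x) =>
    have h1 := C.Nr_eq C.BB x
    have h2 := C.Nr_BB_le x
    simp only [Phi, BB, lev]
    omega
  | .inl (.child u R q r) => exact C.sl_BB_le u R q r
  | .inr (u, p) =>
    simp only [Phi, BB]
    split_ifs with h1 h2
    · have h3 := C.Nr_eq C.BB p
      have h4 := C.Nr_BB_le p
      rw [h2, lev, C.rank_repU]
      omega
    · exact le_rfl
    · exact le_rfl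

theorem BB_le_card [Nonempty σ.Pos] (u p) : C.BB (.inr (u, p)) ≤ Fintype.card C.Vec := by
  rw [Vec_card]
  simp only [BB]
  split_ifs with h
  · refine Nat.mul_le_mul_right _ ?_
    have : C.cc ^ (C.lev u + 1) ≤ C.cc ^ (C.lmax + 1) :=
      Nat.pow_le_pow_right C.cc_pos (by have := C.lev_le (C.mem_Ts.1 h.1); omega)
    rw [av]
    omega
  · exact Nat.zero_le _

end Ctx

namespace Ctx
variable {σ : Sig} (C : Ctx σ)

open Classical in
/-- Initial occurrences. -/
noncomputable def ind (p : σ.Pos) (u : C.T) : ℕ := if ∃ a, u = .base a ∧ occursAt C.I0 p a then 1 else 0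

theorem cmp_base {u : C.T} {R q j a} (h : C.cmp u R q j = .base a) : j = q ∧ u = .base a := by
  unfold cmp at h
  split_ifs at h with h1
  · exact ⟨h1, h⟩
  · unfold ch at h
    split_ifs at h

theorem cmp_pos {u : C.T} {R q j} (h : C.pos u ⟨R, q⟩) : C.pos (C.cmp u R q j) ⟨R, j⟩ := by
  unfold cmp
  split_ifs with h1
  · rw [h1]; exact h
  · exact C.pos_ch.2 (C.Ule_refl _)

theorem i0_congr (R i j) (h' : C.Fl R j i) : C.i0 ⟨R, i⟩ ≤ C.i0 ⟨R, j⟩ := by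
  classical
  have hex : ∀ a, occursAt C.I0 ⟨R, i⟩ a → ∃ b, ∃ t, (⟨R, t⟩ : Fact σ C.A) ∈ C.I0 ∧ t i = a ∧ t j = b := by
    rintro a ⟨t, ht, rfl⟩
    exact ⟨_, t, ht, rfl, rfl⟩
  choose! f hf using hex
  refine Finset.card_le_card_of_injOn f ?_ ?_
  · intro a ha
    simp only [Finset.coe_filter, Finset.mem_univ, true_and, Set.mem_ofPred_eq] at ha ⊢
    obtain ⟨t, ht, -, h2⟩ := hf a ha
    exact ⟨t, ht, h2⟩
  · intro a ha b hb e
    simp only [Finset.coe_filter, Finset.mem_univ, true_and, Set.mem_ofPred_eq] at ha hb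
    obtain ⟨t, ht, h1, h2⟩ := hf a ha
    obtain ⟨t', ht', h1', h2'⟩ := hf b hb
    rw [← h1, ← h1']
    exact C.I0_Fl R j i t t' h' ht ht' (by rw [h2, h2', e])

theorem ind_sum (p : σ.Pos) (x) [DecidableEq C.T] : ∑ u ∈ C.Ts.erase (.deep x), C.ind p u = C.i0 p := by
  classical
  have h : ∑ u ∈ C.Ts.erase (.deep x), C.ind p u =
      ((C.Ts.erase (.deep x)).filter fun u => ∃ a, u = .base a ∧ occursAt C.I0 p a).card := by
    rw [Finset.card_filter]
    refine Finset.sum_congr rfl fun u _ => ?_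
    rw [ind]
    congr
  rw [h, i0]
  symm
  refine Finset.card_bij (fun a _ => .base a) ?_ ?_ ?_
  · intro a ha
    simp only [Finset.mem_filter, Finset.mem_univ, true_and] at ha
    simp only [Finset.mem_filter, Finset.mem_erase, mem_Ts]
    exact ⟨⟨by simp, C.valid_base a⟩, a, rfl, ha⟩
  · intro a _ b _ h
    simpa using h
  · intro u hu
    simp only [Finset.mem_filter] at hu
    obtain ⟨-, a, rfl, ha⟩ := hu
    exact ⟨a, by simpa using ha, rfl⟩

theorem count [Nonempty σ.Pos] : ∃ Z : C.Ix → ℕ,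
    (∀ u p, ¬ (u ∈ C.Ts ∧ C.need u p) → Z (.inr (u, p)) = 0) ∧
    (∀ a, Z (.inl (.base a)) = 1) ∧
    ∀ u ∈ C.Ts, ∀ p, C.pos u p → C.sl Z p u + C.ind p u = Z (.inl u) := by
  classical
  obtain ⟨Z, hB, hZ⟩ := exists_fixpoint C.Phi C.Phi_mono C.BB C.Phi_BB
  have hN0 : ∀ u p, ¬ (u ∈ C.Ts ∧ C.need u p) → Z (.inr (u, p)) = 0 := by
    intro u p h
    rw [← hZ, Phi, if_neg h]
  have hbase : ∀ a, Z (.inl (.base a)) = 1 := fun a => by rw [← hZ, Phi]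
  have hcard : ∀ u p, Z (.inr (u, p)) ≤ Fintype.card C.Vec := fun u p => (hB _).trans (C.BB_le_card u p)
  have hnn0 : ∀ p b, ¬ C.need b.1 ⟨p.1, b.2⟩ → C.nn Z p b = 0 := by
    intro p b h
    rw [nn, hN0 _ _ (fun h' => h h'.2), im_zero, Finset.card_empty]
  have hstrong : ∀ (p : σ.Pos) (b : C.T × Fin (σ.ar p.1)), C.Fl p.1 p.2 b.2 → C.nn Z p b = Z (.inr (b.1, ⟨p.1, b.2⟩)) := by
    intro p b h
    exact C.im_strong h (hcard _ _)
  have single : ∀ u ∈ C.Ts, ∀ p : σ.Pos, (∀ b : C.T × Fin (σ.ar p.1), C.cmp b.1 p.1 b.2 p.2 = u →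
      C.need b.1 ⟨p.1, b.2⟩ → b = (u, p.2)) → C.sl Z p u = Z (.inr (u, p)) := by
    intro u hu p h
    rw [← hstrong p (u, p.2) (C.Fl_refl _ _), sl]
    refine Finset.sum_eq_single_of_mem _ ?_ ?_
    · simp only [Finset.mem_filter, mem_prs]
      exact ⟨C.mem_Ts.1 hu, by simp [cmp]⟩
    · intro b hb hne
      rw [Finset.mem_filter] at hb
      exact hnn0 _ _ fun hn => hne (h b hb.2 hn)
  have hNM : ∀ u ∈ C.Ts, ∀ p, C.need u p → u ≠ .deep (C.repU p) → Z (.inr (u, p)) = Z (.inl u) := by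
    intro u hu p hn hne
    conv_lhs => rw [← hZ, Phi, if_pos ⟨hu, hn⟩, if_neg hne]
  have hbi : ∀ a p, C.ind p (.base a) = if occursAt C.I0 p a then 1 else 0 := by
    intro a p
    simp [ind]
  have key1 : ∀ u ∈ C.Ts, ∀ p, C.pos u p → u ≠ .deep (C.repU p) → C.sl Z p u + C.ind p u = Z (.inl u) := by
    intro u hu p hp hne
    cases u with
    | star => exact hp.elim
    | base a =>
      rw [hbi]
      split_ifs with ho
      · rw [hbase, single _ hu, hN0 (.base a) p fun h => (show _ ∧ ¬ occursAt C.I0 p a from h.2).2 ho]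
        rintro ⟨b1, b2⟩ hb -
        obtain ⟨h1, h2⟩ := C.cmp_base hb
        simp only at h1 h2
        rw [h1, h2]
      · rw [single _ hu, hNM _ hu _ ⟨hp, ho⟩ hne, add_zero]
        rintro ⟨b1, b2⟩ hb -
        obtain ⟨h1, h2⟩ := C.cmp_base hb
        simp only at h1 h2
        rw [h1, h2]
    | deep x =>
      have hx : C.repU x = x := (C.mem_Ts.1 hu).dp x rfl
      have hnx : ¬ C.Ule p x := fun h => hne (by rw [C.repU_eq h hp, hx])
      rw [single _ hu, hNM _ hu _ ⟨hp, fun h => (hnx h).elim⟩ hne]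
      · simp [ind]
      · rintro ⟨b1, b2⟩ hb -
        simp only at hb
        unfold cmp at hb
        split_ifs at hb with h1
        · rw [h1, hb]
        · unfold ch at hb
          split_ifs at hb
          exact (hne hb.symm).elim
    | child u R q r =>
      have h0 : C.ind p (.child u R q r) = 0 := by simp [ind]
      rw [h0, add_zero]
      by_cases hpr : p = ⟨R, r⟩
      · subst hpr
        conv_rhs => rw [← hZ, Phi]
      · rw [single _ hu, hNM _ hu _ ⟨hp, hpr⟩ hne]
        rintro ⟨b1, b2⟩ hb -
        simp only at hb
        unfold cmp at hb
        split_ifs at hb with h1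
        · rw [h1, hb]
        · unfold ch at hb
          split_ifs at hb
          · exact (hpr (by cases p; cases hb; rfl)).elim
          · exact (hpr (by cases p; cases hb; rfl)).elim
  refine ⟨Z, hN0, hbase, ?_⟩
  intro u hu p hp
  by_cases hne : u = .deep (C.repU p)
  swap
  · exact key1 u hu p hp hne
  have hslpos : ∀ u', ¬ C.pos u' p → C.sl Z p u' = 0 := by
    intro u' hu'
    refine Finset.sum_eq_zero fun b hb => hnn0 _ _ fun hn => hu' ?_
    rw [Finset.mem_filter] at hb
    rw [← hb.2]
    exact C.cmp_pos (C.need_pos hn)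
  have hi0 : C.ind p u = 0 := by rw [hne]; simp [ind]
  have tot : ∑ u' ∈ C.Ts, C.sl Z p u' = ∑ b ∈ C.prs p, C.nn Z p b := by
    simp only [sl, Finset.sum_filter]
    rw [Finset.sum_comm]
    refine Finset.sum_congr rfl fun b hb => ?_
    by_cases hn : C.need b.1 ⟨p.1, b.2⟩
    · rw [Finset.sum_ite_eq, if_pos]
      exact C.mem_Ts.2 (C.valid_cmp (C.mem_prs.1 hb) (C.need_pos hn) _)
    · rw [hnn0 _ _ hn]
      simp
  have hbst : C.bst p ∈ C.prs p := C.mem_prs.2 (C.valid_deep (C.mem_Ts.1 hu) hp _)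
  rw [← Finset.add_sum_erase _ _ hbst, ← Finset.add_sum_erase _ _ hu] at tot
  have e1 : ∑ u' ∈ C.Ts.erase u, (C.sl Z p u' + C.ind p u') = C.aa Z p := by
    rw [aa, ← hne, Finset.sum_filter, ← Finset.add_sum_erase _ _ hu]
    rw [if_neg (fun h => h.2 rfl), zero_add]
    refine Finset.sum_congr rfl fun u' hu' => ?_
    rw [Finset.mem_erase] at hu'
    split_ifs with h
    · exact key1 u' hu'.2 p h.1 (hne ▸ h.2)
    · have h1 : ¬ C.pos u' p := fun h2 => h ⟨h2, hu'.1⟩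
      rw [hslpos _ h1, zero_add, ind, if_neg]
      rintro ⟨a, rfl, ha⟩
      exact h1 ⟨p, ha, C.Ule_refl _⟩
  have e2 : ∑ u' ∈ C.Ts.erase u, C.ind p u' = C.i0 p := by rw [hne]; exact C.ind_sum p _
  rw [Finset.sum_add_distrib, e2] at e1
  have e3 : C.ss Z p = C.i0 p + ∑ b ∈ (C.prs p).erase (C.bst p), C.nn Z p b := rfl
  -- the designated slot
  let β : σ.Pos := ⟨p.1, C.repD p.1 p.2⟩
  have e4 : C.nn Z p (C.bst p) = C.aa Z β + C.oth Z β := by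
    rw [hstrong p (C.bst p) (C.repD_le _ _)]
    conv_lhs => rw [← hZ]
    simp only [bst, Phi]
    rw [if_pos, if_pos trivial]
    exact ⟨C.mem_Ts.2 (C.valid_deep (C.mem_Ts.1 hu) hp _), C.repU_ge _, fun _ => (C.repD_repD _ _).symm⟩
  have e5 : C.ss Z β = C.ss Z p := by
    have h1 : C.bst β = C.bst p := by
      simp only [bst, β, C.repD_repD]
    have h2 : C.i0 β = C.i0 p := le_antisymm (C.i0_congr _ _ _ (C.repD_le _ _))
      (C.i0_congr _ _ _ (C.repD_ge _ _))
    simp only [ss]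
    rw [h2, h1]
    congr 1
    refine Finset.sum_congr rfl fun b _ => ?_
    simp only [nn, β]
    rw [C.im_congr (C.repD_ge _ _) (C.repD_le _ _)]
  have e6 := C.Nr_eq Z β
  have e7 : C.rank β = C.rank p := C.rank_repD _ _
  have e8 := C.Nr_eq Z (C.repU p)
  have e9 : C.aa Z (C.repU p) = C.aa Z p := by
    simp only [aa, C.repU_repU]
    congr 1
    refine Finset.filter_congr fun u _ => ?_
    exact and_congr_left fun _ => ⟨fun h => C.pos_up h (C.repU_ge _), fun h => C.pos_up h (C.repU_le _)⟩
  have e10 : Z (.inl u) = C.ss Z (C.repU p) + C.oth Z (C.repU p) := by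
    rw [hne]
    conv_lhs => rw [← hZ, Phi]
  rw [C.rank_repU] at e8
  rw [e7] at e6
  omega

end Ctx

/-! ### Part D: gluing -/

theorem idx_exists {γ : Type} (s : Finset γ) : ∃ f : γ → ℕ, (∀ x ∈ s, ∀ y ∈ s, f x = f y → x = y) ∧
    (∀ z ∈ s, f z < s.card) ∧ ∀ i < s.card, ∃ z ∈ s, f z = i := by
  classical
  refine ⟨fun z => if h : z ∈ s then (s.equivFin ⟨z, h⟩).val else 0, ?_, ?_, ?_⟩
  · intro x hx y hy h
    simp only [hx, hy, dif_pos] at h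
    have := s.equivFin.injective (Fin.ext h)
    simpa using this
  · intro z hz
    simp only [hz, dif_pos]
    exact (s.equivFin ⟨z, hz⟩).2
  · intro i hi
    refine ⟨(s.equivFin.symm ⟨i, hi⟩).1, (s.equivFin.symm ⟨i, hi⟩).2, ?_⟩
    simp

theorem ext_pos {σ : Sig} (R : σ.Rel) (t : Fin (σ.ar R) → ℕ) : ∃ g : σ.Pos → ℕ, ∀ i, g ⟨R, i⟩ = t i := by
  classical
  refine ⟨fun p => if h : p.1 = R then t (h ▸ p.2) else 0, fun i => ?_⟩
  simp

namespace Ctx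
variable {σ : Sig} (C : Ctx σ)

abbrev Sl (p : σ.Pos) : Type := {u // u ∈ C.Ts} × Fin (σ.ar p.1) × C.Vec

abbrev SS : Type := C.A ⊕ (Σ p : σ.Pos, C.Sl p)

def bagf : C.SS → Option (C.T × σ.Pos)
  | .inl _ => none
  | .inr ⟨p, z⟩ => some (z.1.1, ⟨p.1, z.2.1⟩)

noncomputable def ty (p : σ.Pos) (z : C.Sl p) : C.T := C.cmp z.1.1 p.1 z.2.1 p.2

noncomputable def elf (idx : ∀ p : σ.Pos, C.T → C.Sl p → ℕ) : C.SS → C.T × ℕ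
  | .inl a => (.base a, 0)
  | .inr ⟨p, z⟩ => (C.ty p z, idx p (C.ty p z) z)

inductive WFp (Z : C.Ix → ℕ) : Fact σ C.SS → Prop
  | init (R) (t) (h : (⟨R, t⟩ : Fact σ C.A) ∈ C.I0) : WFp Z ⟨R, fun i => .inl (t i)⟩
  | new (R : σ.Rel) (u : {u // u ∈ C.Ts}) (q : Fin (σ.ar R)) (v : C.Vec)
      (h : v ∈ C.VV (Z (.inr (u.1, ⟨R, q⟩)))) :
      WFp Z ⟨R, fun j => .inr ⟨⟨R, j⟩, u, q, C.restr R q j v⟩⟩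

def GoodP (j : ℕ) : Option (C.T × σ.Pos) → (C.SS → ℕ) → Prop
  | none, f => j ≤ C.K0 ∧ ∀ a, f (.inl a) = C.va a
  | some (u, ⟨R, q⟩), f => j ≤ C.K0 ∧ ∃ t, (⟨R, t⟩ : Fact σ ℕ) ∈ C.M ∧
      (∀ i hu w, f (.inr ⟨⟨R, i⟩, ⟨u, hu⟩, q, w⟩) = t i) ∧ ∀ i, C.Sim j (C.cmp u R q i) (t i)

def isSlot (Z : C.Ix → ℕ) (p : σ.Pos) (z : C.Sl p) : Prop :=
  z.2.2 ∈ C.im (Z (.inr (z.1.1, ⟨p.1, z.2.1⟩))) p.1 z.2.1 p.2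

theorem occ_WF {Z : C.Ix → ℕ} {p : σ.Pos} {s : C.SS} :
    occursAt {F | C.WFp Z F} p s ↔ (∃ a, s = .inl a ∧ occursAt C.I0 p a) ∨
      ∃ z, s = .inr ⟨p, z⟩ ∧ C.isSlot Z p z := by
  obtain ⟨R, j⟩ := p
  constructor
  · rintro ⟨t, ht, rfl⟩
    change C.WFp Z ⟨R, t⟩ at ht
    generalize hF : (⟨R, t⟩ : Fact σ C.SS) = F at ht
    cases ht with
    | init R' t' h =>
      obtain ⟨h1, h2⟩ := Sigma.mk.inj hF
      subst h1
      obtain rfl := eq_of_heq h2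
      exact Or.inl ⟨t' j, rfl, t', h, rfl⟩
    | new R' u q v h =>
      obtain ⟨h1, h2⟩ := Sigma.mk.inj hF
      subst h1
      obtain rfl := eq_of_heq h2
      exact Or.inr ⟨_, rfl, Finset.mem_image_of_mem _ h⟩
  · rintro (⟨a, rfl, t, ht, rfl⟩ | ⟨⟨u, q, w⟩, rfl, h⟩)
    · exact ⟨_, WFp.init _ t ht, rfl⟩
    · obtain ⟨v, hv, e⟩ := Finset.mem_image.1 h
      simp only at e
      subst e
      exact ⟨_, WFp.new R u q v hv, rfl⟩

theorem glue [Nonempty σ.Pos] (Su : Set (UID σ)) (Sf : Set (FD σ))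
    (hSu : ∀ τ ∈ Su, C.Ule τ.src τ.dst)
    (hSf : ∀ φ ∈ Sf, ∀ c, (∀ l ∈ φ.lhs, C.Fl φ.rel c l) → C.Fl φ.rel c φ.rhs)
    (hI : ∀ φ ∈ Sf, satFD C.I0 φ) (q : CQ σ) (hq : q.atoms.length ≤ C.K0) :
    ∃ (Y : Type) (J : Inst σ Y) (emb : C.A → Y), J.Finite ∧ (∀ τ ∈ Su, satUID J τ) ∧
      (∀ φ ∈ Sf, satFD J φ) ∧ (satCQ J q → satCQ C.M q) ∧
      (∀ F ∈ C.I0, (⟨F.1, fun i => emb (F.2 i)⟩ : Fact σ Y) ∈ J) ∧ Function.Injective emb := by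
  classical
  obtain ⟨Z, hN0, hbase, hkey⟩ := C.count
  let sls : ∀ p : σ.Pos, C.T → Finset (C.Sl p) := fun p τ =>
    Finset.univ.filter fun z => C.ty p z = τ ∧ C.isSlot Z p z
  have hcard : ∀ p τ, (sls p τ).card = C.sl Z p τ := by
    intro p τ
    simp only [sl, nn]
    rw [← Finset.card_sigma]
    refine Finset.card_bij (fun z _ => ⟨(z.1.1, z.2.1), z.2.2⟩) ?_ ?_ ?_
    · intro z hz
      simp only [sls, Finset.mem_filter, Finset.mem_univ, true_and] at hz
      simp only [Finset.mem_sigma, Finset.mem_filter, mem_prs]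
      exact ⟨⟨C.mem_Ts.1 z.1.2, hz.1⟩, hz.2⟩
    · rintro ⟨⟨u, hu⟩, i, w⟩ - ⟨⟨u', hu'⟩, i', w'⟩ - e
      simp at e
      obtain ⟨⟨rfl, rfl⟩, rfl⟩ := e
      rfl
    · rintro ⟨⟨u, i⟩, w⟩ h
      simp only [Finset.mem_sigma, Finset.mem_filter, mem_prs] at h
      exact ⟨⟨⟨u, C.mem_Ts.2 h.1.1⟩, i, w⟩, by
        simp only [sls, Finset.mem_filter, Finset.mem_univ, true_and]; exact ⟨h.1.2, h.2⟩, rfl⟩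
  choose idx hidx1 hidx2 hidx3 using fun p τ => idx_exists (sls p τ)
  let el := C.elf idx
  have hneed : ∀ p z, C.isSlot Z p z → C.need z.1.1 ⟨p.1, z.2.1⟩ := by
    intro p z h
    by_contra hn
    rw [isSlot, hN0 _ _ (fun h => hn h.2), im_zero] at h
    simp at h
  -- two slots at the same position with the same element coincide
  have hoccel : ∀ p s, occursAt {F | C.WFp Z F} p s → (el s).1 ∈ C.Ts ∧ C.pos (el s).1 p ∧ (el s).2 < Z (.inl (el s).1) := by
    intro p s hs
    rcases C.occ_WF.1 hs with ⟨a, rfl, ha⟩ | ⟨z, rfl, hz⟩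
    · refine ⟨C.mem_Ts.2 (C.valid_base a), ⟨p, ha, C.Ule_refl _⟩, ?_⟩
      simp only [el, elf, hbase]
      omega
    · have hn := hneed p z hz
      have h1 : C.ty p z ∈ C.Ts := C.mem_Ts.2 (C.valid_cmp (C.mem_Ts.1 z.1.2) (C.need_pos hn) _)
      have h2 : C.pos (C.ty p z) p := C.cmp_pos (C.need_pos hn)
      refine ⟨h1, h2, ?_⟩
      have h3 := hidx2 p (C.ty p z) z (by simp [sls, hz])
      have h4 := hkey _ h1 p h2
      rw [hcard] at h3
      simp only [el, elf]
      omega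
  have hbz : ∀ p z a, C.isSlot Z p z → C.ty p z = .base a → z.2.1 = p.2 ∧ z.1.1 = .base a ∧ ¬ occursAt C.I0 p a := by
    intro p z a hz h
    obtain ⟨h1, h2⟩ := C.cmp_base h
    have hn := hneed p z hz
    rw [h2, ← h1] at hn
    exact ⟨h1.symm, h2, hn.2⟩
  have hinl : ∀ p, ∀ s : C.SS, ∀ a, occursAt {F | C.WFp Z F} p s → (el s).1 = .base a →
      occursAt C.I0 p a → s = .inl a := by
    intro p s a hs he ha
    rcases C.occ_WF.1 hs with ⟨b, rfl, hb⟩ | ⟨z, rfl, hz⟩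
    · simp only [el, elf] at he
      cases he
      rfl
    · exact ((hbz p z a hz he).2.2 ha).elim
  refine Exists.elim (cover (σ := σ) el C.bagf {F | C.WFp Z F} Su Sf C.M C.K0
    C.GoodP ?_ ?_ ?_ ?_ ?_ ?_ ?_ q hq) ?_
  · -- bags
    rintro F hF i j
    cases hF <;> rfl
  · -- inclusion dependencies
    intro τ hτ s hs
    obtain ⟨g1, g2, g3⟩ := hoccel _ _ hs
    have g4 := C.pos_up g2 (hSu τ hτ)
    have g5 := hkey _ g1 _ g4
    by_cases hb : ∃ a, (el s).1 = .base a ∧ occursAt C.I0 τ.dst a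
    · obtain ⟨a, e, ha⟩ := hb
      refine ⟨.inl a, ?_, C.occ_WF.2 (Or.inl ⟨a, rfl, ha⟩)⟩
      rw [e, hbase] at g3
      simp only [el, elf] at e g3 ⊢
      exact Prod.ext e.symm (by simp only; omega)
    · rw [ind, if_neg hb, add_zero, ← hcard] at g5
      obtain ⟨z, hz, e⟩ := hidx3 τ.dst (el s).1 (el s).2 (by rw [g5]; exact g3)
      simp only [sls, Finset.mem_filter, Finset.mem_univ, true_and] at hz
      refine ⟨.inr ⟨τ.dst, z⟩, ?_, C.occ_WF.2 (Or.inr ⟨z, rfl, hz.2⟩)⟩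
      refine Prod.ext hz.1 ?_
      rw [← e]
      change idx τ.dst (C.ty τ.dst z) z = _
      rw [hz.1]
  · -- injectivity
    intro p s s' hs hs' e
    rcases C.occ_WF.1 hs with ⟨a, rfl, ha⟩ | ⟨z, rfl, hz⟩
    · exact (hinl p s' a hs' (by rw [← e]; rfl) ha).symm
    · rcases C.occ_WF.1 hs' with ⟨a, rfl, ha⟩ | ⟨z', rfl, hz'⟩
      · exact hinl p _ a hs (by rw [e]; rfl) ha
      · simp only [el, elf, Prod.mk.injEq] at e
        obtain ⟨e1, e2⟩ := e
        rw [e1] at e2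
        rw [hidx1 p (C.ty p z') z (by simp [sls, hz, e1]) z' (by simp [sls, hz']) e2]
  · -- functional dependencies
    intro φ hφ t u ht hu hag
    obtain ⟨l0, hl0⟩ := φ.lhs_nonempty
    have e0 := hag l0 hl0
    have hφ1 := hSf φ hφ
    have hφ2 := hI φ hφ
    obtain ⟨R, lhs, rhs, ne1, ne2⟩ := φ
    simp only at *
    change C.WFp Z ⟨R, t⟩ at ht
    change C.WFp Z ⟨R, u⟩ at hu
    generalize hF : (⟨R, t⟩ : Fact σ C.SS) = F at ht
    generalize hF' : (⟨R, u⟩ : Fact σ C.SS) = F' at hu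
    cases ht with
    | init R1 t1 g1 =>
      obtain ⟨h1, h2⟩ := Sigma.mk.inj hF
      subst h1
      obtain rfl := eq_of_heq h2
      cases hu with
      | init R2 t2 g2 =>
        obtain ⟨h1, h2⟩ := Sigma.mk.inj hF'
        subst h1
        obtain rfl := eq_of_heq h2
        exact congrArg Sum.inl (hφ2 t1 t2 g1 g2 fun i hi => Sum.inl_injective (hag i hi))
      | new R2 u2 q2 v2 g2 =>
        obtain ⟨h1, h2⟩ := Sigma.mk.inj hF'
        subst h1
        obtain rfl := eq_of_heq h2
        simp at e0
    | new R1 u1 q1 v1 g1 =>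
      obtain ⟨h1, h2⟩ := Sigma.mk.inj hF
      subst h1
      obtain rfl := eq_of_heq h2
      cases hu with
      | init R2 t2 g2 =>
        obtain ⟨h1, h2⟩ := Sigma.mk.inj hF'
        subst h1
        obtain rfl := eq_of_heq h2
        simp at e0
      | new R2 u2 q2 v2 g2 =>
        obtain ⟨h1, h2⟩ := Sigma.mk.inj hF'
        subst h1
        obtain rfl := eq_of_heq h2
        simp only [Sum.inr.injEq, Sigma.mk.injEq, heq_eq_eq, Prod.mk.injEq, true_and] at e0 hag ⊢
        obtain ⟨rfl, rfl, -⟩ := e0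
        refine ⟨rfl, rfl, ?_⟩
        funext c
        by_cases hm : C.masked R q1 rhs c
        · rw [restr, restr, if_pos hm, if_pos hm]
        · rw [restr, restr, if_neg hm, if_neg hm]
          by_cases hall : ∀ l ∈ lhs, C.masked R q1 l c
          · obtain ⟨c', rfl, m1, m2⟩ := hall l0 hl0
            refine (hm ⟨c', rfl, m1, hφ1 c' fun l hl => ?_⟩).elim
            obtain ⟨c'', e, -, m3⟩ := hall l hl
            cases e
            exact m3
          · push Not at hall
            obtain ⟨l, hl, hml⟩ := hall
            have := congrFun (hag l hl).2.2 c
            rwa [restr, restr, if_neg hml, if_neg hml] at this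
  · -- facts map to the model
    intro j F f hF i hg
    cases hF with
    | init R t h =>
      have := hg.2
      simp only [this]
      exact C.I0_M R t h
    | new R u p v h =>
      obtain ⟨-, t, ht, hf, -⟩ := hg
      have : (fun i => f (.inr ⟨⟨R, i⟩, u, p, C.restr R p i v⟩)) = t := funext fun i => hf i u.2 _
      simp only [this]
      exact ht
  · -- back and forth
    intro j f s s' hs hs' hg hne he
    obtain ⟨p, hs⟩ := hs
    obtain ⟨p', hs'⟩ := hs'
    -- the simulation at the shared element
    have hjk : j + 1 ≤ C.K0 := by
      rcases C.occ_WF.1 hs with ⟨a, rfl, ha⟩ | ⟨z, rfl, hz⟩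
      · exact hg.1
      · exact hg.1
    have hsim : C.Sim (j+1) (el s).1 (f s) := by
      rcases C.occ_WF.1 hs with ⟨a, rfl, ha⟩ | ⟨z, rfl, hz⟩
      · rw [hg.2 a]
        exact C.sim_base a _
      · obtain ⟨-, t, ht, hf, hsm⟩ := hg
        have := hsm p.2
        rw [← hf p.2 z.1.2 z.2.2] at this
        exact this
    have he1 : (el s').1 = (el s).1 := by rw [he]
    rw [← he1] at hsim
    rcases C.occ_WF.1 hs' with ⟨a, rfl, ha⟩ | ⟨z, rfl, hz⟩
    · refine ⟨fun x => match x with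
        | .inl a => C.va a
        | .inr _ => 0, ⟨by omega, fun _ => rfl⟩, ?_⟩
      exact hsim.2.symm
    · have hn := hneed p' z hz
      have hex : ∃ t, (⟨p'.1, t⟩ : Fact σ ℕ) ∈ C.M ∧ t p'.2 = f s ∧
          ∀ i, C.Sim j (C.cmp z.1.1 p'.1 z.2.1 i) (t i) := by
        by_cases hown : p'.2 = z.2.1
        · have : (el (.inr ⟨p', z⟩)).1 = z.1.1 := by
            simp only [el, elf, ty, cmp, if_pos hown]
          rw [this] at hsim
          rw [hown]
          exact hsim.mono1.down (C.need_pos hn)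
        · have : (el (.inr ⟨p', z⟩)).1 = C.ch z.1.1 p'.1 z.2.1 p'.2 := by
            simp only [el, elf, ty, cmp, if_neg hown]
          rw [this] at hsim
          exact hsim.up hjk
      obtain ⟨t, ht, e, hs⟩ := hex
      obtain ⟨g, hg'⟩ := ext_pos p'.1 t
      refine ⟨fun x => match x with
        | .inl _ => 0
        | .inr y => g y.1, ⟨by omega, t, ht, fun i _ _ => hg' i, hs⟩, ?_⟩
      rw [← e]
      exact hg' p'.2
  · -- existence
    rintro s ⟨p, hs⟩
    rcases C.occ_WF.1 hs with ⟨a, rfl, ha⟩ | ⟨z, rfl, hz⟩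
    · exact ⟨fun x => match x with
        | .inl a => C.va a
        | .inr _ => 0, le_rfl, fun _ => rfl⟩
    · have hn := hneed p z hz
      obtain ⟨m, hm⟩ := (C.mem_Ts.1 z.1.2).sim
      obtain ⟨t, ht, -, hs⟩ := hm.down (C.need_pos hn)
      obtain ⟨g, hg'⟩ := ext_pos p.1 t
      exact ⟨fun x => match x with
        | .inl _ => 0
        | .inr y => g y.1, le_rfl, t, ht, fun i _ _ => hg' i, hs⟩
  · rintro Y ⟨J, emb, h1, h2, h3, h4, h5, h6⟩
    refine ⟨Y, J, fun a => emb (.inl a), h1, h2, h3, h4, ?_, ?_⟩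
    · rintro ⟨R, t⟩ hF
      exact h5 ⟨R, _⟩ (WFp.init R t hF)
    · intro a b e
      have := h6 _ _ e
      simp only [el, elf, Prod.mk.injEq] at this
      cases this.1
      rfl

end Ctx

/-! ### Part E: semantic data and conclusion -/

section Sem
variable {σ : Sig} (Su : Set (UID σ)) (Sf : Set (FD σ))

def fsat (I : Inst σ ℕ) : Prop := I.Finite ∧ satAllC I Su Sf

def sUle (p q : σ.Pos) : Prop := ∀ I, fsat Su Sf I → ∀ a, occursAt I p a → occursAt I q a

def sFl (R : σ.Rel) (i j : Fin (σ.ar R)) : Prop := ∀ I, fsat Su Sf I →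
  ∀ t u, (⟨R, t⟩ : Fact σ ℕ) ∈ I → (⟨R, u⟩ : Fact σ ℕ) ∈ I → t i = u i → t j = u j

def occ (I : Inst σ ℕ) (p : σ.Pos) : Set ℕ := {a | occursAt I p a}

theorem activeDom_finite {α : Type} {I : Inst σ α} (h : I.Finite) : (activeDom I).Finite := by
  have : activeDom I = ⋃ F ∈ I, Set.range F.2 := by
    ext a
    simp [activeDom]
  rw [this]
  exact h.biUnion fun F _ => Set.finite_range _

theorem occ_finite {I : Inst σ ℕ} (h : I.Finite) (p) : (occ I p).Finite :=
  (activeDom_finite h).subset fun _ ⟨t, ht, e⟩ => ⟨_, ht, p.2, e⟩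

def cardle (p p' : σ.Pos) : Prop := ∀ I, fsat Su Sf I → (occ I p).ncard ≤ (occ I p').ncard

noncomputable def srank (p : σ.Pos) : ℕ := {p' | cardle Su Sf p' p}.ncard

variable {Su Sf}

theorem cardle_rank {p q : σ.Pos} (h : cardle Su Sf p q) : srank Su Sf p ≤ srank Su Sf q :=
  Set.ncard_le_ncard (fun _ hp I hI => (hp I hI).trans (h I hI)) (Set.toFinite _)

theorem rank_cardle {p q : σ.Pos} (h : cardle Su Sf p q) (e : srank Su Sf p = srank Su Sf q) : cardle Su Sf q p := by
  have : {p' | cardle Su Sf p' p} = {p' | cardle Su Sf p' q} :=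
    Set.eq_of_subset_of_ncard_le (fun _ hp I hI => (hp I hI).trans (h I hI)) e.symm.le (Set.toFinite _)
  have h2 : q ∈ {p' | cardle Su Sf p' q} := fun _ _ => le_rfl
  rw [← this] at h2
  exact h2

theorem Ule_cardle {p q : σ.Pos} (h : sUle Su Sf p q) : cardle Su Sf p q := fun I hI =>
  Set.ncard_le_ncard (fun a ha => h I hI a ha) (occ_finite hI.1 q)

theorem Ule_cardle_rev {p q : σ.Pos} (h : sUle Su Sf p q) (h' : cardle Su Sf q p) : sUle Su Sf q p := by
  intro I hI a ha
  have : occ I p = occ I q := Set.eq_of_subset_of_ncard_le (fun a ha => h I hI a ha) (h' I hI) (occ_finite hI.1 q)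
  have h2 : a ∈ occ I q := ha
  rw [← this] at h2
  exact h2

theorem Fl_fun {R : σ.Rel} {r q : Fin (σ.ar R)} (h : sFl Su Sf R r q) {I} (hI : fsat Su Sf I) :
    ∃ f : ℕ → ℕ, (∀ t, (⟨R, t⟩ : Fact σ ℕ) ∈ I → f (t r) = t q) ∧ occ I ⟨R, q⟩ = f '' occ I ⟨R, r⟩ := by
  classical
  have : ∀ a, ∃ b, ∀ t, (⟨R, t⟩ : Fact σ ℕ) ∈ I → t r = a → t q = b := by
    intro a
    by_cases hex : ∃ t, (⟨R, t⟩ : Fact σ ℕ) ∈ I ∧ t r = a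
    · obtain ⟨t, ht, rfl⟩ := hex
      exact ⟨t q, fun u hu e => h I hI u t hu ht e⟩
    · exact ⟨0, fun t ht e => (hex ⟨t, ht, e⟩).elim⟩
  choose f hf using this
  refine ⟨f, fun t ht => (hf _ t ht rfl).symm, ?_⟩
  ext b
  constructor
  · rintro ⟨t, ht, rfl⟩
    exact ⟨t r, ⟨t, ht, rfl⟩, (hf _ t ht rfl).symm⟩
  · rintro ⟨_, ⟨t, ht, rfl⟩, rfl⟩
    exact ⟨t, ht, hf _ t ht rfl⟩

theorem Fl_cardle {R : σ.Rel} {r q : Fin (σ.ar R)} (h : sFl Su Sf R r q) : cardle Su Sf ⟨R, q⟩ ⟨R, r⟩ := by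
  intro I hI
  obtain ⟨f, -, e⟩ := Fl_fun h hI
  rw [e]
  exact Set.ncard_image_le (occ_finite hI.1 _)

theorem Fl_cardle_rev {R : σ.Rel} {r q : Fin (σ.ar R)} (h : sFl Su Sf R r q)
    (h' : cardle Su Sf ⟨R, r⟩ ⟨R, q⟩) : sFl Su Sf R q r := by
  intro I hI t u ht hu e
  obtain ⟨f, hf, he⟩ := Fl_fun h hI
  have hc := h' I hI
  rw [he] at hc
  have hinj : Set.InjOn f (occ I ⟨R, r⟩) := Set.injOn_of_ncard_image_eq
    (le_antisymm (Set.ncard_image_le (occ_finite hI.1 _)) hc) (occ_finite hI.1 _)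
  exact hinj ⟨t, ht, rfl⟩ ⟨u, hu, rfl⟩ (by rw [hf t ht, hf u hu, e])

end Sem

theorem transfer {σ : Sig} (Su : Set (UID σ)) (Sf : Set (FD σ)) (I₀ : Inst σ ℕ) (hI₀ : I₀.Finite) (q : CQ σ)
    {Y : Type} (J : Inst σ Y) (emb : {a // a ∈ activeDom I₀} → Y) (hJ : J.Finite) (hU : ∀ τ ∈ Su, satUID J τ)
    (hF : ∀ φ ∈ Sf, satFD J φ)
    (hI : ∀ (R) (t : Fin (σ.ar R) → {a // a ∈ activeDom I₀}), (⟨R, fun i => (t i).1⟩ : Fact σ ℕ) ∈ I₀ →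
      (⟨R, fun i => emb (t i)⟩ : Fact σ Y) ∈ J)
    (hemb : Function.Injective emb) (h : finEntails I₀ Su Sf q) : satCQ J q := by
  classical
  obtain ⟨e, he⟩ := Set.countable_iff_exists_injOn.1 (activeDom_finite hJ).countable
  obtain ⟨b, hb⟩ := (activeDom_finite hI₀).bddAbove
  let ι : Y → ℕ := fun y => if h : ∃ a, emb a = y then h.choose.1 else b + 1 + e y
  have hι : ∀ a, ι (emb a) = a.1 := by
    intro a
    have hex : ∃ a', emb a' = emb a := ⟨a, rfl⟩
    simp only [ι, dif_pos hex]
    exact congrArg _ (hemb hex.choose_spec)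
  have hι' : ∀ y, (¬ ∃ a, emb a = y) → ι y = b + 1 + e y := by
    intro y hy
    simp only [ι, dif_neg hy]
  have hinj : Set.InjOn ι (activeDom J) := by
    intro y hy y' hy' h
    by_cases h1 : ∃ a, emb a = y
    · obtain ⟨a, rfl⟩ := h1
      by_cases h2 : ∃ a, emb a = y'
      · obtain ⟨a', rfl⟩ := h2
        rw [hι, hι] at h
        rw [Subtype.ext h]
      · rw [hι, hι' _ h2] at h
        have := hb a.2
        omega
    · by_cases h2 : ∃ a, emb a = y'
      · obtain ⟨a', rfl⟩ := h2
        rw [hι, hι' _ h1] at h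
        have := hb a'.2
        omega
      · rw [hι' _ h1, hι' _ h2] at h
        exact he hy hy' (by omega)
  let J' : Inst σ ℕ := (fun F : Fact σ Y => (⟨F.1, fun i => ι (F.2 i)⟩ : Fact σ ℕ)) '' J
  have hJ' : ∀ R (t : Fin (σ.ar R) → ℕ), (⟨R, t⟩ : Fact σ ℕ) ∈ J' →
      ∃ t', (⟨R, t'⟩ : Fact σ Y) ∈ J ∧ t = fun i => ι (t' i) := by
    rintro R t ⟨⟨R', t'⟩, hF, hm⟩
    obtain ⟨h1, h2⟩ := Sigma.mk.inj hm
    subst h1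
    exact ⟨t', hF, (eq_of_heq h2).symm⟩
  have hact : ∀ {R} {t : Fin (σ.ar R) → Y}, (⟨R, t⟩ : Fact σ Y) ∈ J → ∀ i, t i ∈ activeDom J :=
    fun ht i => ⟨_, ht, i, rfl⟩
  refine Exists.elim (h J' ?_ (hJ.image _) ⟨?_, ?_⟩) ?_
  · rintro ⟨R, t⟩ ht
    have := hI R (fun i => ⟨t i, ⟨R, t⟩, ht, i, rfl⟩) ht
    refine ⟨_, this, ?_⟩
    simp only [hι]
  · rintro τ hτ a ⟨t, ht, rfl⟩
    obtain ⟨t', ht', rfl⟩ := hJ' _ _ ht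
    obtain ⟨u, hu, e⟩ := hU τ hτ _ ⟨t', ht', rfl⟩
    exact ⟨_, ⟨_, hu, rfl⟩, congrArg ι e⟩
  · rintro φ hφ t u ht hu hag
    obtain ⟨t', ht', rfl⟩ := hJ' _ _ ht
    obtain ⟨u', hu', rfl⟩ := hJ' _ _ hu
    exact congrArg ι (hF φ hφ t' u' ht' hu' fun i hi => hinj (hact ht' i) (hact hu' i) (hag i hi))
  · intro g hg
    have hx : ∀ x, ∃ y ∈ activeDom J, ι y = g x := by
      intro x
      obtain ⟨A, hA, i, rfl⟩ := q.vars_occur x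
      obtain ⟨t, ht, e⟩ := hJ' _ _ (hg A hA)
      exact ⟨t i, hact ht i, (congrFun e i).symm⟩
    choose g' hg1 hg2 using hx
    refine ⟨g', fun A hA => ?_⟩
    obtain ⟨t, ht, e⟩ := hJ' _ _ (hg A hA)
    have : (fun i => g' (A.2 i)) = t := by
      funext i
      refine hinj (hg1 _) (hact ht i) ?_
      rw [hg2]
      exact congrFun e i
    rw [this]
    exact ht

theorem main_dir {σ : Sig} (Su : Set (UID σ)) (Sf : Set (FD σ)) (I₀ : Inst σ ℕ) (hI₀ : I₀.Finite) (q : CQ σ)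
    [Nonempty σ.Pos] (h : finEntails I₀ Su Sf q) (M : Inst σ ℕ) (hM : I₀ ⊆ M)
    (hsat : satAllC M {τ : UID σ | finImpUID Su Sf τ} {φ : FD σ | finImpFD Su Sf φ}) : satCQ M q := by
  classical
  have hMU : ∀ p q a, sUle Su Sf p q → occursAt M p a → occursAt M q a := by
    intro p q a hpq ha
    by_cases e : p = q
    · exact e ▸ ha
    · exact hsat.1 ⟨p, q, e⟩ (fun I h1 h2 => hpq I ⟨h1, h2⟩) a ha
  have hMF : ∀ R i j, sFl Su Sf R i j → ∀ t u, (⟨R, t⟩ : Fact σ ℕ) ∈ M → (⟨R, u⟩ : Fact σ ℕ) ∈ M →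
      t i = u i → t j = u j := by
    intro R i j hij t u ht hu e
    by_cases hne : i = j
    · exact hne ▸ e
    · refine hsat.2 ⟨R, {i}, j, ⟨i, rfl⟩, fun hj => hne hj.symm⟩ ?_ t u ht hu ?_
      · intro I h1 h2 t u ht hu hh
        exact hij I ⟨h1, h2⟩ t u ht hu (hh i rfl)
      · intro l hl
        have hl' : l = i := hl
        rw [hl']
        exact e
  let C : Ctx σ := {
    Ule := sUle Su Sf
    Fl := sFl Su Sf
    rank := srank Su Sf
    rmax := (Set.univ : Set σ.Pos).ncard
    M := M
    A := {a // a ∈ activeDom I₀}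
    finA := (activeDom_finite hI₀).to_subtype
    va := Subtype.val
    I0 := {F | (⟨F.1, fun i => (F.2 i).1⟩ : Fact σ ℕ) ∈ I₀}
    K0 := q.atoms.length
    Ule_refl := fun p I _ a ha => ha
    Ule_trans := fun p q r h1 h2 I hI a ha => h2 I hI a (h1 I hI a ha)
    Fl_refl := fun R i I _ t u _ _ e => e
    Fl_trans := fun R i j l h1 h2 I hI t u ht hu e => h2 I hI t u ht hu (h1 I hI t u ht hu e)
    M_Ule := hMU
    I0_Fl := fun R i j t u hij ht hu e =>
      Subtype.ext (hMF R i j hij _ _ (hM ht) (hM hu) (congrArg Subtype.val e))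
    rank_pos := fun p => (Set.ncard_pos (Set.toFinite _)).2 ⟨p, fun _ _ => le_rfl⟩
    rank_le := fun p => Set.ncard_le_ncard (Set.subset_univ _) (Set.toFinite _)
    Ule_rank := fun p q h => cardle_rank (Ule_cardle h)
    Ule_rank_eq := fun p q h e => Ule_cardle_rev h (rank_cardle (Ule_cardle h) e)
    Fl_rank := fun R r q h => cardle_rank (Fl_cardle h)
    Fl_rank_eq := fun R r q h e => Fl_cardle_rev h (rank_cardle (Fl_cardle h) e)
    I0_M := fun R t ht => hM ht }
  obtain ⟨Y, J, emb, h1, h2, h3, h4, h5, h6⟩ := C.glue Su Sf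
    (fun τ hτ I hI => hI.2.1 τ hτ)
    (fun φ hφ c hc I hI t u ht hu e => hI.2.2 φ hφ t u ht hu fun l hl => hc l hl I hI t u ht hu e)
    (fun φ hφ t u ht hu hag => Subtype.ext (hsat.2 φ (fun I _ h2 => h2.2 φ hφ) _ _ (hM ht) (hM hu)
      fun i hi => congrArg Subtype.val (hag i hi))) q le_rfl
  exact h4 (transfer Su Sf I₀ hI₀ q J emb h1 h2 h3 (fun R t ht => h5 ⟨R, t⟩ ht) h6 h)

/-- **Main Theorem.** Conjunctions of FDs and UIDs are finitely controllable up to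
finite closure: for a finite set of FDs and UIDs, a finite instance `I₀` and a
Boolean CQ `q`, finite open-world entailment with respect to the constraints
coincides with unrestricted open-world entailment with respect to their finite
closure. -/
theorem finitely_controllable_up_to_finite_closure
    {σ : Sig} (Su : Set (UID σ)) (Sf : Set (FD σ))
    (hSu : Su.Finite) (hSf : Sf.Finite)
    (I₀ : Inst σ ℕ) (hI₀ : I₀.Finite) (q : CQ σ) :
    finEntails I₀ Su Sf q ↔
      unrEntails I₀ {τ : UID σ | finImpUID Su Sf τ} {φ : FD σ | finImpFD Su Sf φ} q := by
  constructor
  · intro h M hM hsat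
    by_cases hp : Nonempty σ.Pos
    · exact main_dir Su Sf I₀ hI₀ q h M hM hsat
    · have hR : IsEmpty σ.Rel := ⟨fun R => hp ⟨⟨R, ⟨0, σ.ar_pos R⟩⟩⟩⟩
      refine h M hM (Set.toFinite _) ⟨fun τ _ => ?_, fun φ _ => ?_⟩
      · exact (hp ⟨τ.src⟩).elim
      · exact hR.elim φ.rel
  · intro h I hI hfin hsat
    exact h I hI ⟨fun τ hτ => hτ I hfin hsat, fun φ hφ => hφ I hfin hsat⟩

end FQA
end

section
/- (Separability of UIDs and FDs) Let Σ_FD be a set of FDs, Σ_UID a set of UIDs, and I₀ a finite instance satisfying Σ_FD. Then for every Boolean conjunctive query q, (I₀, Σ_FD ∪ Σ_UID) ⊨_unr q if and only if (I₀, Σ_UID) ⊨_unr q. -/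
namespace FQA

variable {σ : Sig} {α β : Type}

/-- Elements of the explicit chase. -/
inductive Term (σ : Sig) : Type
  | base : ℕ → Term σ
  | mk : Term σ → σ.Pos → σ.Pos → Term σ

def Term.code : Term σ → ℕ × List (σ.Pos × σ.Pos)
  | .base n => (n, [])
  | .mk a p x => (a.code.1, (p, x) :: a.code.2)

theorem Term.code_inj : ∀ a b : Term σ, a.code = b.code → a = b := by
  intro a
  induction a with
  | base n =>
    intro b h
    cases b <;> simp_all [Term.code]
  | mk a p x ih =>
    intro b h
    cases b with
    | base n => simp [Term.code] at h
    | mk b p' x' =>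
      simp only [Term.code, Prod.mk.injEq, List.cons.injEq] at h
      obtain ⟨h1, ⟨h2, h3⟩, h4⟩ := h
      rw [ih b (Prod.ext h1 h4), h2, h3]

theorem Term.countable (σ : Sig) : Countable (Term σ) := by
  have := σ.rel_fin
  exact Function.Injective.countable (f := Term.code) (fun a b h => Term.code_inj a b h)

def Reach (Su : Set (UID σ)) : σ.Pos → σ.Pos → Prop :=
  Relation.ReflTransGen (fun p q => ∃ τ ∈ Su, τ.src = p ∧ τ.dst = q)

def orig (Su : Set (UID σ)) (I₀ : Inst σ ℕ) : Term σ → σ.Pos → Prop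
  | .base n, s => occursAt I₀ s n
  | .mk a p x, s => s = x ∧ x.1 = p.1 ∧ x ≠ p ∧
      ((∃ s', orig Su I₀ a s' ∧ Reach Su s' p) ∧ ¬ orig Su I₀ a p)

def Need (Su : Set (UID σ)) (I₀ : Inst σ ℕ) (a : Term σ) (p : σ.Pos) : Prop :=
  (∃ s', orig Su I₀ a s' ∧ Reach Su s' p) ∧ ¬ orig Su I₀ a p

open Classical in
noncomputable def val (a : Term σ) (p x : σ.Pos) : Term σ := if x = p then a else .mk a p x

def chase (Su : Set (UID σ)) (I₀ : Inst σ ℕ) : Inst σ (Term σ) :=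
  {F | (∃ t : Fin (σ.ar F.1) → ℕ, (⟨F.1, t⟩ : Fact σ ℕ) ∈ I₀ ∧ ∀ i, F.2 i = .base (t i)) ∨
    ∃ a p, Need Su I₀ a p ∧ F.1 = p.1 ∧ ∀ i, F.2 i = val a p ⟨F.1, i⟩}

theorem occ_chase (Su : Set (UID σ)) (I₀ : Inst σ ℕ) (p : σ.Pos) (a : Term σ) :
    occursAt (chase Su I₀) p a ↔ ∃ s, orig Su I₀ a s ∧ Reach Su s p := by
  constructor
  · rintro ⟨t, ht, rfl⟩
    rcases ht with ⟨u, hu, htu⟩ | ⟨a, p', hn, hp, htu⟩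
    · refine ⟨p, ?_, Relation.ReflTransGen.refl⟩
      have := htu p.2
      dsimp only at this
      rw [this]
      exact ⟨u, hu, rfl⟩
    · have := htu p.2
      dsimp only at this hp
      rw [this]
      unfold val
      split_ifs with h
      · change p = p' at h
        subst h
        exact hn.1
      · exact ⟨p, ⟨rfl, hp, h, hn⟩, Relation.ReflTransGen.refl⟩
  · intro h
    by_cases ho : orig Su I₀ a p
    · cases a with
      | base n =>
        obtain ⟨t, ht, htn⟩ := ho
        exact ⟨fun i => .base (t i), Or.inl ⟨t, ht, fun i => rfl⟩, by simp [htn]⟩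
      | mk a p' x =>
        obtain ⟨rfl, h1, h2, hn⟩ := ho
        refine ⟨fun i => val a p' ⟨p.1, i⟩, Or.inr ⟨a, p', hn, h1, fun i => rfl⟩, ?_⟩
        change val a p' p = _
        simp [val, h2]
    · refine ⟨fun i => val a p ⟨p.1, i⟩, Or.inr ⟨a, p, ⟨h, ho⟩, rfl, fun i => rfl⟩, ?_⟩
      change val a p p = _
      simp [val]

theorem chase_uid (Su : Set (UID σ)) (I₀ : Inst σ ℕ) (τ : UID σ) (hτ : τ ∈ Su) :
    satUID (chase Su I₀) τ := by
  intro a ha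
  rw [occ_chase] at ha ⊢
  obtain ⟨s, h1, h2⟩ := ha
  exact ⟨s, h1, h2.tail ⟨τ, hτ, rfl, rfl⟩⟩

theorem chase_fd_aux (Su : Set (UID σ)) (I₀ : Inst σ ℕ) (a a' : Term σ) (p p' x : σ.Pos)
    (hn : Need Su I₀ a p) (hn' : Need Su I₀ a' p') (hx : x.1 = p.1) (hx' : x.1 = p'.1)
    (h : val a p x = val a' p' x) : a = a' ∧ p = p' := by
  unfold val at h
  split_ifs at h with h1 h2 h2
  · exact ⟨h, h1.symm.trans h2⟩
  · exfalso
    subst h1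
    subst h
    exact hn.2 ⟨rfl, hx', h2, hn'⟩
  · exfalso
    subst h2
    subst h
    exact hn'.2 ⟨rfl, hx, h1, hn⟩
  · injection h with h3 h4
    exact ⟨h3, h4⟩

theorem chase_fd_aux2 (Su : Set (UID σ)) (I₀ : Inst σ ℕ) (a : Term σ) (p x : σ.Pos) (n : ℕ)
    (hn : Need Su I₀ a p) (ho : occursAt I₀ x n) (h : Term.base n = val a p x) : False := by
  unfold val at h
  split_ifs at h with h1
  subst h1
  subst h
  exact hn.2 ho

theorem chase_fd (Su : Set (UID σ)) (I₀ : Inst σ ℕ) (φ : FD σ) (hφ : satFD I₀ φ) :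
    satFD (chase Su I₀) φ := by
  intro t u ht hu htu
  obtain ⟨i, hi⟩ := φ.lhs_nonempty
  rcases ht with ⟨t', ht', htt⟩ | ⟨a, p, hn, hp, htt⟩ <;>
  rcases hu with ⟨u', hu', huu⟩ | ⟨a', p', hn', hp', huu⟩ <;> dsimp only at *
  · rw [htt, huu, hφ t' u' ht' hu']
    intro j hj
    have := htu j hj
    rw [htt, huu] at this
    injection this
  · have := htu i hi
    rw [htt, huu] at this
    exact (chase_fd_aux2 Su I₀ a' p' ⟨φ.rel, i⟩ _ hn' ⟨t', ht', rfl⟩ this).elim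
  · have := htu i hi
    rw [htt, huu] at this
    exact (chase_fd_aux2 Su I₀ a p ⟨φ.rel, i⟩ _ hn ⟨u', hu', rfl⟩ this.symm).elim
  · have := htu i hi
    rw [htt, huu] at this
    obtain ⟨rfl, rfl⟩ := chase_fd_aux Su I₀ a a' p p' ⟨φ.rel, i⟩ hn hn' hp hp' this
    rw [htt, huu]

theorem chase_hom (Su : Set (UID σ)) (I₀ I : Inst σ ℕ) (hI : I₀ ⊆ I)
    (hS : ∀ τ ∈ Su, satUID I τ) :
    ∃ h : Term σ → ℕ, ∀ (R : σ.Rel) (t : Fin (σ.ar R) → Term σ),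
      (⟨R, t⟩ : Fact σ (Term σ)) ∈ chase Su I₀ → (⟨R, fun i => h (t i)⟩ : Fact σ ℕ) ∈ I := by
  classical
  have key : ∀ (p : σ.Pos) (b : ℕ), ∃ g : σ.Pos → ℕ, occursAt I p b →
      (⟨p.1, fun i => g ⟨p.1, i⟩⟩ : Fact σ ℕ) ∈ I ∧ g p = b := by
    intro p b
    by_cases h : occursAt I p b
    · obtain ⟨t, ht, htb⟩ := h
      refine ⟨fun x => if h : x.1 = p.1 then t (h ▸ x.2) else 0, fun _ => ⟨?_, ?_⟩⟩
      · simpa using ht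
      · simpa using htb
    · exact ⟨fun _ => 0, fun h' => (h h').elim⟩
  choose g hg using key
  let h : Term σ → ℕ := fun a => Term.rec (fun n => n) (fun _ p x ha => g p ha x) a
  have hreach : ∀ b s p, Reach Su s p → occursAt I s b → occursAt I p b := by
    intro b s p hr hs
    induction hr with
    | refl => exact hs
    | tail _ h2 ih =>
      obtain ⟨τ, hτ, rfl, rfl⟩ := h2
      exact hS τ hτ b ih
  have horig : ∀ a s, orig Su I₀ a s → occursAt I s (h a) := by
    intro a
    induction a with
    | base n =>
      rintro s ⟨t, ht, htn⟩
      exact ⟨t, hI ht, htn⟩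
    | mk a p x ih =>
      rintro s ⟨rfl, h1, h2, ⟨s', h3, h4⟩, h5⟩
      have := (hg p (h a) (hreach _ _ _ h4 (ih _ h3))).1
      obtain ⟨R, i⟩ := s
      obtain ⟨R', j⟩ := p
      dsimp only at h1
      subst h1
      exact ⟨_, this, rfl⟩
  refine ⟨h, ?_⟩
  rintro R t (⟨u, hu, htu⟩ | ⟨a, p, hn, hp, htu⟩) <;> dsimp only at *
  · have : (fun i => h (t i)) = u := by
      funext i
      rw [htu]
    rw [this]
    exact hI hu
  · obtain ⟨⟨s, h1, h2⟩, h3⟩ := hn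
    subst hp
    obtain ⟨k1, k2⟩ := hg p (h a) (hreach _ _ _ h2 (horig _ _ h1))
    have : (fun i => h (t i)) = fun i => g p (h a) ⟨p.1, i⟩ := by
      funext i
      rw [htu]
      unfold val
      split_ifs with h4
      · rw [h4, k2]
      · rfl
    rw [this]
    exact k1

theorem exists_embed (I₀ : Inst σ ℕ) (hfin : I₀.Finite) :
    ∃ f : Term σ → ℕ, Function.Injective f ∧
      ∀ F ∈ I₀, ∀ i, f (.base (F.2 i)) = F.2 i := by
  classical
  have := Term.countable σ
  obtain ⟨e, he⟩ := Countable.exists_injective_nat (Term σ)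
  have : ∃ M : ℕ, ∀ F ∈ I₀, ∀ i, F.2 i < M := by
    have hf : (⋃ F ∈ I₀, Set.range F.2).Finite := hfin.biUnion fun F _ => Set.finite_range _
    obtain ⟨M, hM⟩ := hf.bddAbove
    refine ⟨M + 1, fun F hF i => Nat.lt_succ_of_le (hM ?_)⟩
    simp only [Set.mem_iUnion]
    exact ⟨F, hF, i, rfl⟩
  obtain ⟨M, hM⟩ := this
  refine ⟨fun a => if ∃ n < M, a = .base n then a.code.1 else M + e a, ?_, ?_⟩
  · intro a b hab
    dsimp only at hab
    split_ifs at hab with h1 h2 h2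
    · obtain ⟨n, hn, rfl⟩ := h1
      obtain ⟨m, hm, rfl⟩ := h2
      simpa [Term.code] using hab
    · obtain ⟨n, hn, rfl⟩ := h1
      simp only [Term.code] at hab
      omega
    · obtain ⟨n, hn, rfl⟩ := h2
      simp only [Term.code] at hab
      omega
    · exact he (by omega)
  · intro F hF i
    dsimp only
    rw [if_pos ⟨_, hM F hF i, rfl⟩]
    rfl

/-- **Separability of UIDs and FDs.** If the finite instance `I₀` satisfies the FDs
`Sf`, then for every Boolean CQ `q`, unrestricted open-world entailment under
`Sf ∪ Su` coincides with unrestricted open-world entailment under the UIDs `Su`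
alone. -/
theorem separability
    {σ : Sig} (Sf : Set (FD σ)) (Su : Set (UID σ))
    (I₀ : Inst σ ℕ) (hI₀fin : I₀.Finite)
    (hI₀fd : ∀ φ ∈ Sf, satFD I₀ φ)
    (q : CQ σ) :
    unrEntails I₀ Su Sf q ↔ unrEntails I₀ Su (∅ : Set (FD σ)) q := by
  constructor
  · intro H I hI hS
    obtain ⟨f, hf, hfb⟩ := exists_embed I₀ hI₀fin
    obtain ⟨h, hh⟩ := chase_hom Su I₀ I hI hS.1
    let J : Inst σ ℕ := {F | ∃ t : Fin (σ.ar F.1) → Term σ,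
      (⟨F.1, t⟩ : Fact σ (Term σ)) ∈ chase Su I₀ ∧ ∀ i, F.2 i = f (t i)}
    have hJ : satCQ J q := by
      apply H J
      · intro F hF
        exact ⟨fun i => .base (F.2 i), Or.inl ⟨F.2, hF, fun i => rfl⟩, fun i => (hfb F hF i).symm⟩
      · refine ⟨?_, ?_⟩
        · rintro τ hτ b ⟨t, ⟨u, hu, htu⟩, rfl⟩
          obtain ⟨v, hv, hvu⟩ := chase_uid Su I₀ τ hτ (u τ.src.2) ⟨u, hu, rfl⟩
          refine ⟨fun i => f (v i), ⟨v, hv, fun i => rfl⟩, ?_⟩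
          have := htu τ.src.2
          dsimp only at this
          rw [this, ← hvu]
        · rintro φ hφ t u ⟨t', ht', htt⟩ ⟨u', hu', huu⟩ htu
          dsimp only at *
          rw [htt, huu, chase_fd Su I₀ φ (hI₀fd φ hφ) t' u' ht' hu']
          intro i hi
          have := htu i hi
          rw [htt, huu] at this
          exact hf this
    obtain ⟨m, hm⟩ := hJ
    have : Nonempty (Term σ) := ⟨.base 0⟩
    refine ⟨fun x => h (Function.invFun f (m x)), fun A hA => ?_⟩
    obtain ⟨t, ht, htm⟩ := hm A hA
    dsimp only at ht htm
    have := hh _ t ht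
    convert this using 3 with i
    dsimp only
    rw [htm, Function.leftInverse_invFun hf]
  · intro H I hI hS
    exact H I hI ⟨hS.1, fun φ hφ => hφ.elim⟩

end FQA
end

section
/- Assume the arity-two assumption and that Σ_UID^rev and Σ_UFD are reversible. Then any balanced finite instance I₀ satisfying Σ_UFD has a finite weakly-sound superinstance I (for Σ_UID^rev and I₀) that satisfies Σ_UID^rev ∪ Σ_UFD and such that dom(I) = dom(I₀). -/
namespace FQA

variable {σ : Sig} {α β : Type}

/-- A unary functional dependency `R^src → R^dst` (nontrivial: `src ≠ dst`). -/
structure UFD (σ : Sig) where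
  rel : σ.Rel
  src : Fin (σ.ar rel)
  dst : Fin (σ.ar rel)
  ne : src ≠ dst

/-- The reverse of a UFD. -/
def UFD.rev (φ : UFD σ) : UFD σ := ⟨φ.rel, φ.dst, φ.src, φ.ne.symm⟩

/-- The source position of a UFD, as a position of the signature. -/
def UFD.posSrc (φ : UFD σ) : σ.Pos := ⟨φ.rel, φ.src⟩

/-- The target position of a UFD, as a position of the signature. -/
def UFD.posDst (φ : UFD σ) : σ.Pos := ⟨φ.rel, φ.dst⟩

/-- An instance satisfies a UFD if any two facts of `rel` agreeing at `src` agree at `dst`. -/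
def satUFD (I : Inst σ α) (φ : UFD σ) : Prop :=
  ∀ t u : Fin (σ.ar φ.rel) → α,
    (⟨φ.rel, t⟩ : Fact σ α) ∈ I → (⟨φ.rel, u⟩ : Fact σ α) ∈ I →
    t φ.src = u φ.src → t φ.dst = u φ.dst

/-- `a` wants to appear at position `p` in `I` (with respect to the UIDs `Su`): some
UID of `Su` with target `p` applies to `a`, and `a` does not yet occur at `p`. -/
def wants (Su : Set (UID σ)) (I : Inst σ α) (p : σ.Pos) (a : α) : Prop :=
  (∃ τ ∈ Su, τ.dst = p ∧ occursAt I τ.src a) ∧ ¬ occursAt I p a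

/-- `I` is a weakly-sound superinstance of `I₀` for the UIDs `Su`: elements of `I₀`
only appear at positions where they already appeared or wanted to appear, and new
elements only appear at positions related by UIDs of `Su` in both directions. -/
def WeaklySound (Su : Set (UID σ)) (I₀ I : Inst σ ℕ) : Prop :=
  (∀ a ∈ activeDom I₀, ∀ p : σ.Pos, occursAt I p a →
      occursAt I₀ p a ∨ wants Su I₀ p a) ∧
  (∀ a ∈ activeDom I, a ∉ activeDom I₀ → ∀ p q : σ.Pos,
      occursAt I p a → occursAt I q a →
      p = q ∨ ∃ h : p ≠ q, (⟨p, q, h⟩ : UID σ) ∈ Su ∧ (⟨q, p, h.symm⟩ : UID σ) ∈ Su)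

/-- A set of UIDs is transitively closed. -/
def TransClosedUID (Su : Set (UID σ)) : Prop :=
  ∀ τ ∈ Su, ∀ τ' ∈ Su, τ.dst = τ'.src →
    ∀ h : τ.src ≠ τ'.dst, (⟨τ.src, τ'.dst, h⟩ : UID σ) ∈ Su

/-- A set of UFDs is closed under UFD transitivity. -/
def TransClosedUFD (Sf : Set (UFD σ)) : Prop :=
  ∀ (R : σ.Rel) (i j k : Fin (σ.ar R)) (h1 : i ≠ j) (h2 : j ≠ k) (h3 : i ≠ k),
    (⟨R, i, j, h1⟩ : UFD σ) ∈ Sf → (⟨R, j, k, h2⟩ : UFD σ) ∈ Sf →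
    (⟨R, i, k, h3⟩ : UFD σ) ∈ Sf

/-- A position occurs in some UID of `Su`. -/
def occursInUIDs (Su : Set (UID σ)) (p : σ.Pos) : Prop :=
  ∃ τ ∈ Su, τ.src = p ∨ τ.dst = p

/-- The UIDs `Su` and UFDs `Sf` are reversible: both are closed under implication
(transitivity), every UID of `Su` has its reverse in `Su`, and every UFD of `Sf`
whose two positions occur in UIDs of `Su` has its reverse in `Sf`. -/
def Reversible (Su : Set (UID σ)) (Sf : Set (UFD σ)) : Prop :=
  TransClosedUID Su ∧ TransClosedUFD Sf ∧
  (∀ τ ∈ Su, τ.rev ∈ Su) ∧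
  (∀ φ ∈ Sf, occursInUIDs Su φ.posSrc → occursInUIDs Su φ.posDst → φ.rev ∈ Sf)

/-- An instance is balanced: for every two positions of a relation related by a pair
of inverse UFDs of `Sf`, equally many elements want to appear at the two positions. -/
def Balanced (Su : Set (UID σ)) (Sf : Set (UFD σ)) (I : Inst σ ℕ) : Prop :=
  ∀ (R : σ.Rel) (i j : Fin (σ.ar R)) (hij : i ≠ j),
    (⟨R, i, j, hij⟩ : UFD σ) ∈ Sf → (⟨R, j, i, hij.symm⟩ : UFD σ) ∈ Sf →
    {a : ℕ | wants Su I ⟨R, i⟩ a}.ncard = {a : ℕ | wants Su I ⟨R, j⟩ a}.ncard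

/-- Under the arity-two assumption, for reversible UIDs `Su` and UFDs `Sf`, any
balanced finite instance `I₀` satisfying `Sf` has a finite weakly-sound superinstance
satisfying `Su ∪ Sf` whose domain equals that of `I₀`. -/
theorem balanced_weakly_sound_completion_binary
    {σ : Sig} (Su : Set (UID σ)) (Sf : Set (UFD σ))
    (hrev : Reversible Su Sf)
    (har2 : ∀ R : σ.Rel, σ.ar R = 2)
    (hufd2 : ∀ (R : σ.Rel) (i j : Fin (σ.ar R)) (h : i ≠ j), (⟨R, i, j, h⟩ : UFD σ) ∈ Sf)
    (I₀ : Inst σ ℕ) (hfin : I₀.Finite)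
    (hsat : ∀ φ ∈ Sf, satUFD I₀ φ)
    (hbal : Balanced Su Sf I₀) :
    ∃ I : Inst σ ℕ, I₀ ⊆ I ∧ I.Finite ∧ WeaklySound Su I₀ I ∧
      (∀ τ ∈ Su, satUID I τ) ∧ (∀ φ ∈ Sf, satUFD I φ) ∧
      activeDom I = activeDom I₀ := by
  classical
  obtain ⟨htr, -, -, -⟩ := hrev
  have hoccdom : ∀ (p : σ.Pos) a, occursAt I₀ p a → a ∈ activeDom I₀ := by
    rintro p a ⟨t, ht, rfl⟩
    exact ⟨_, ht, p.2, rfl⟩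
  have hwdom : ∀ (p : σ.Pos) a, wants Su I₀ p a → a ∈ activeDom I₀ := by
    rintro p a ⟨⟨τ, -, -, h⟩, -⟩
    exact hoccdom _ _ h
  have hdomfin : (activeDom I₀).Finite := by
    have : activeDom I₀ = ⋃ F ∈ I₀, Set.range F.2 := by
      ext a; simp [activeDom]
    rw [this]
    exact hfin.biUnion fun F _ => Set.finite_range _
  have hwfin : ∀ p : σ.Pos, {a | wants Su I₀ p a}.Finite := fun p =>
    hdomfin.subset fun a h => hwdom p a h
  obtain ⟨n, hn⟩ : ∃ n : σ.Rel → ℕ, ∀ p : σ.Pos, {a | wants Su I₀ p a}.ncard = n p.1 := by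
    refine ⟨fun R => {a | wants Su I₀ ⟨R, ⟨0, σ.ar_pos R⟩⟩ a}.ncard, ?_⟩
    rintro ⟨R, i⟩
    by_cases h : i = ⟨0, σ.ar_pos R⟩
    · rw [h]
    · exact hbal R i _ h (hufd2 _ _ _ _) (hufd2 _ _ _ _)
  have hf : ∀ p : σ.Pos, ∃ f : Fin (n p.1) → ℕ, Function.Injective f ∧
      ∀ a, wants Su I₀ p a ↔ ∃ k, f k = a := by
    intro p
    have hc : (hwfin p).toFinset.card = n p.1 := by
      rw [← hn p, Set.ncard_eq_toFinset_card _ (hwfin p)]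
    refine ⟨(hwfin p).toFinset.orderEmbOfFin hc,
      ((hwfin p).toFinset.orderEmbOfFin hc).injective, fun a => ?_⟩
    have := Finset.range_orderEmbOfFin (hwfin p).toFinset hc
    have h2 : a ∈ Set.range ((hwfin p).toFinset.orderEmbOfFin hc) ↔ wants Su I₀ p a := by
      rw [this]; simp
    exact h2.symm
  choose f hinj hran using hf
  let N : Inst σ ℕ := Set.range fun x : (Σ R : σ.Rel, Fin (n R)) =>
    (⟨x.1, fun i => f ⟨x.1, i⟩ x.2⟩ : Fact σ ℕ)
  have hN : ∀ R t, (⟨R, t⟩ : Fact σ ℕ) ∈ N ↔ ∃ k : Fin (n R), t = fun i => f ⟨R, i⟩ k := by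
    intro R t
    constructor
    · rintro ⟨⟨R', k⟩, h⟩
      obtain ⟨rfl, h⟩ := Sigma.mk.inj_iff.1 h
      exact ⟨k, (eq_of_heq h).symm⟩
    · rintro ⟨k, rfl⟩
      exact ⟨⟨R, k⟩, rfl⟩
  have hocc : ∀ (p : σ.Pos) a, occursAt (I₀ ∪ N) p a ↔ occursAt I₀ p a ∨ wants Su I₀ p a := by
    intro p a
    constructor
    · rintro ⟨t, ht | ht, h⟩
      · exact Or.inl ⟨t, ht, h⟩
      · obtain ⟨k, rfl⟩ := (hN _ _).1 ht
        exact Or.inr ((hran p a).2 ⟨k, h⟩)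
    · rintro (⟨t, ht, h⟩ | h)
      · exact ⟨t, Or.inl ht, h⟩
      · obtain ⟨k, hk⟩ := (hran p a).1 h
        exact ⟨_, Or.inr ((hN p.1 _).2 ⟨k, rfl⟩), hk⟩
  have hdom : activeDom (I₀ ∪ N) = activeDom I₀ := by
    apply Set.Subset.antisymm
    · rintro a ⟨F, hF, i, hi⟩
      rcases (hocc ⟨F.1, i⟩ a).1 ⟨F.2, hF, hi⟩ with h | h
      · exact hoccdom _ _ h
      · exact hwdom _ _ h
    · rintro a ⟨F, hF, i, hi⟩
      exact ⟨F, Or.inl hF, i, hi⟩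
  have := σ.rel_fin
  have key : ∀ (R : σ.Rel) (i : Fin (σ.ar R)) (t : Fin (σ.ar R) → ℕ) (k : Fin (n R)),
      (⟨R, t⟩ : Fact σ ℕ) ∈ I₀ → t i = f ⟨R, i⟩ k → False := by
    intro R i t k ht h
    exact ((hran ⟨R, i⟩ _).2 ⟨k, rfl⟩).2 ⟨t, ht, h⟩
  refine ⟨I₀ ∪ N, Set.subset_union_left, hfin.union (Set.finite_range _), ⟨?_, ?_⟩, ?_, ?_, hdom⟩
  · intro a _ p h
    exact (hocc p a).1 h
  · intro a ha hna
    exact absurd (hdom ▸ ha) hna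
  · intro τ hτ a h
    rw [hocc] at h ⊢
    by_cases hd : occursAt I₀ τ.dst a
    · exact Or.inl hd
    refine Or.inr ⟨?_, hd⟩
    rcases h with h | ⟨⟨τ', hτ', he, h⟩, -⟩
    · exact ⟨τ, hτ, rfl, h⟩
    · have hne : τ'.src ≠ τ.dst := fun e => hd (e ▸ h)
      exact ⟨_, htr τ' hτ' τ hτ he hne, rfl, h⟩
  · intro φ hφ t u ht hu h
    rcases ht with ht | ht <;> rcases hu with hu | hu
    · exact hsat φ hφ t u ht hu h
    · obtain ⟨k, rfl⟩ := (hN _ _).1 hu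
      exact (key _ _ _ _ ht h).elim
    · obtain ⟨k, rfl⟩ := (hN _ _).1 ht
      exact (key _ _ _ _ hu h.symm).elim
    · obtain ⟨k, rfl⟩ := (hN _ _).1 ht
      obtain ⟨l, rfl⟩ := (hN _ _).1 hu
      have : k = l := hinj ⟨φ.rel, φ.src⟩ h
      rw [this]

end FQA
end

section
/- (Balancing Lemma) Assume Σ_UID^rev and Σ_UFD are reversible. Then any finite instance I satisfying Σ_UFD has a balanced pssinstance. -/
namespace FQA

variable {σ : Sig} {α β : Type}

/-- Positions `p` and `q` are `∼_ID`-related: equal, or the UID `p ⊆ q` is in `Su`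
(under the reversibility assumption this is an equivalence relation). -/
def eqID (Su : Set (UID σ)) (p q : σ.Pos) : Prop :=
  p = q ∨ ∃ h : p ≠ q, (⟨p, q, h⟩ : UID σ) ∈ Su

/-- Wanting for a pssinstance `(I, H, lam)`: elements of `I` want to appear where
they wanted to appear in `I`, and helpers want to appear at the positions of their
assigned `∼_ID`-class. -/
def wantsP (Su : Set (UID σ)) (I : Inst σ ℕ) (H : Set ℕ) (lam : ℕ → Set σ.Pos)
    (p : σ.Pos) (a : ℕ) : Prop :=
  wants Su I p a ∨ (a ∈ H ∧ p ∈ lam a)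

/-- `(I, H, lam)` is a pssinstance of `I`: `H` is a finite set of fresh helper
elements, and `lam` maps each helper to a `∼_ID`-class of positions. -/
def IsPSS (Su : Set (UID σ)) (I : Inst σ ℕ) (H : Set ℕ) (lam : ℕ → Set σ.Pos) : Prop :=
  H.Finite ∧ Disjoint H (activeDom I) ∧
  ∀ h ∈ H, ∃ p : σ.Pos, lam h = {q | eqID Su p q}

/-- The pssinstance `(I, H, lam)` is balanced: for every two positions of a relation
related by a pair of inverse UFDs of `Sf`, equally many elements want to appear there. -/
def BalancedPSS (Su : Set (UID σ)) (Sf : Set (UFD σ)) (I : Inst σ ℕ)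
    (H : Set ℕ) (lam : ℕ → Set σ.Pos) : Prop :=
  ∀ (R : σ.Rel) (i j : Fin (σ.ar R)) (hij : i ≠ j),
    (⟨R, i, j, hij⟩ : UFD σ) ∈ Sf → (⟨R, j, i, hij.symm⟩ : UFD σ) ∈ Sf →
    {a : ℕ | wantsP Su I H lam ⟨R, i⟩ a}.ncard =
      {a : ℕ | wantsP Su I H lam ⟨R, j⟩ a}.ncard

theorem occ_le {σ : Sig} (I : Inst σ ℕ) (hfin : ∀ p : σ.Pos, {a | occursAt I p a}.Finite)
    (φ : UFD σ) (h : satUFD I φ) :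
    {a | occursAt I (⟨φ.rel, φ.dst⟩ : σ.Pos) a}.ncard ≤
      {a | occursAt I (⟨φ.rel, φ.src⟩ : σ.Pos) a}.ncard := by
  classical
  let g : ℕ → ℕ := fun a =>
    if h : ∃ t : Fin (σ.ar φ.rel) → ℕ, (⟨φ.rel, t⟩ : Fact σ ℕ) ∈ I ∧ t φ.src = a then
      h.choose φ.dst else 0
  have hsub : {a | occursAt I (⟨φ.rel, φ.dst⟩ : σ.Pos) a} ⊆
      g '' {a | occursAt I (⟨φ.rel, φ.src⟩ : σ.Pos) a} := by
    rintro b ⟨t, ht, rfl⟩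
    refine ⟨t φ.src, ⟨t, ht, rfl⟩, ?_⟩
    have hex : ∃ u : Fin (σ.ar φ.rel) → ℕ, (⟨φ.rel, u⟩ : Fact σ ℕ) ∈ I ∧ u φ.src = t φ.src :=
      ⟨t, ht, rfl⟩
    simp only [g, dif_pos hex]
    exact h _ _ hex.choose_spec.1 ht hex.choose_spec.2
  exact (Set.ncard_le_ncard hsub ((hfin _).image g)).trans (Set.ncard_image_le (hfin _))

/-- **Balancing Lemma.** For reversible UIDs `Su` and UFDs `Sf`, any finite instance
`I` satisfying `Sf` has a balanced pssinstance. -/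
theorem balancing
    {σ : Sig} (Su : Set (UID σ)) (Sf : Set (UFD σ))
    (hrev : Reversible Su Sf)
    (I : Inst σ ℕ) (hfin : I.Finite)
    (hsat : ∀ φ ∈ Sf, satUFD I φ) :
    ∃ (H : Set ℕ) (lam : ℕ → Set σ.Pos),
      IsPSS Su I H lam ∧ BalancedPSS Su Sf I H lam := by
  classical
  obtain ⟨htr, -, hsym, -⟩ := hrev
  have hdom : (activeDom I).Finite := by
    have : activeDom I = ⋃ F ∈ I, Set.range F.2 := by
      ext a; simp [activeDom]
    rw [this]
    exact hfin.biUnion fun F _ => Set.finite_range _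
  have hocc : ∀ (p : σ.Pos) a, occursAt I p a → a ∈ activeDom I := by
    rintro p a ⟨t, ht, rfl⟩
    exact ⟨_, ht, p.2, rfl⟩
  have hoccfin : ∀ p : σ.Pos, {a | occursAt I p a}.Finite := fun p =>
    hdom.subset (hocc p)
  obtain ⟨M, hM⟩ : ∃ M : ℕ, ∀ a ∈ activeDom I, a < M := by
    obtain ⟨B, hB⟩ := hdom.bddAbove
    exact ⟨B + 1, fun a ha => Nat.lt_succ_of_le (hB ha)⟩
  let S : Setoid σ.Pos :=
    { r := eqID Su
      iseqv :=
        { refl := fun p => Or.inl rfl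
          symm := by
            rintro p q (rfl | ⟨h, hm⟩)
            · exact Or.inl rfl
            · exact Or.inr ⟨h.symm, hsym _ hm⟩
          trans := by
            rintro p q r (rfl | ⟨h, hm⟩) (rfl | ⟨h', hm'⟩)
            · exact Or.inl rfl
            · exact Or.inr ⟨h', hm'⟩
            · exact Or.inr ⟨h, hm⟩
            · by_cases hpr : p = r
              · exact Or.inl hpr
              · exact Or.inr ⟨hpr, htr _ hm _ hm' rfl hpr⟩ } }
  have hS : ∀ p q : σ.Pos, (Quotient.mk S p = Quotient.mk S q) ↔ eqID Su p q := fun p q =>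
    Quotient.eq (r := S)
  haveI := σ.rel_fin
  obtain ⟨e, he⟩ : ∃ e : Quotient S → ℕ, Function.Injective e := exists_injective_nat _
  let f : Quotient S → ℕ → ℕ := fun c x => M + Nat.pair (e c) x
  have hf : ∀ c x c' x', f c x = f c' x' → c = c' ∧ x = x' := by
    intro c x c' x' h
    have h2 := Nat.pair_eq_pair.1 (Nat.add_left_cancel h)
    exact ⟨he h2.1, h2.2⟩
  let E : Quotient S → Set ℕ := fun c => {a | ∃ r, Quotient.mk S r = c ∧ occursAt I r a}
  have hEM : ∀ c, E c ⊆ Set.Iio M := by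
    rintro c a ⟨r, -, hr⟩
    exact hM a (hocc r a hr)
  let H : Set ℕ := ⋃ c, f c '' (Set.Iio M \ E c)
  let lam : ℕ → Set σ.Pos := fun h => {q | ∃ x, f (Quotient.mk S q) x = h}
  have key : ∀ q : σ.Pos, {a : ℕ | wantsP Su I H lam q a}.ncard +
      {a | occursAt I q a}.ncard = M := by
    intro q
    have h1 : {a : ℕ | wantsP Su I H lam q a} =
        (E (Quotient.mk S q) \ {a | occursAt I q a}) ∪
          f (Quotient.mk S q) '' (Set.Iio M \ E (Quotient.mk S q)) := by
      ext a
      simp only [Set.mem_setOf_eq, Set.mem_union, wantsP]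
      refine or_congr ?_ ?_
      · simp only [wants, Set.mem_diff, Set.mem_setOf_eq, E]
        refine and_congr_left fun hn => ?_
        constructor
        · rintro ⟨τ, hτ, rfl, ho⟩
          exact ⟨τ.src, (hS _ _).2 (Or.inr ⟨τ.ne, hτ⟩), ho⟩
        · rintro ⟨r, hr, ho⟩
          rcases (hS _ _).1 hr with rfl | ⟨h, hm⟩
          · exact absurd ho hn
          · exact ⟨_, hm, rfl, ho⟩
      · constructor
        · rintro ⟨haH, x, hx⟩
          obtain ⟨c, y, hy, hya⟩ := Set.mem_iUnion.1 haH
          obtain ⟨rfl, rfl⟩ := hf _ _ _ _ (hx.trans hya.symm)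
          exact ⟨x, hy, hx⟩
        · rintro ⟨x, hx, rfl⟩
          exact ⟨Set.mem_iUnion.2 ⟨_, x, hx, rfl⟩, x, rfl⟩
    have hfinM : (Set.Iio M).Finite := Set.finite_Iio M
    have hEf : (E (Quotient.mk S q)).Finite := hfinM.subset (hEM _)
    have hoE : {a | occursAt I q a} ⊆ E (Quotient.mk S q) := fun a ha => ⟨q, rfl, ha⟩
    rw [h1, Set.ncard_union_eq ?_ hEf.diff (hfinM.diff.image _),
      Set.ncard_image_of_injective _ (fun x y h => (hf _ _ _ _ h).2)]
    · have a1 := Set.ncard_diff_add_ncard_of_subset hoE hEf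
      have a2 := Set.ncard_diff_add_ncard_of_subset (hEM (Quotient.mk S q)) hfinM
      have a3 : (Set.Iio M).ncard = M := by
        rw [Set.ncard_eq_toFinset_card']; simp
      omega
    · rw [Set.disjoint_left]
      rintro a ⟨ha, -⟩ ⟨x, -, rfl⟩
      have := hEM _ ha
      simp [f] at this
  refine ⟨H, lam, ⟨?_, ?_, ?_⟩, ?_⟩
  · exact Set.finite_iUnion fun c => ((Set.finite_Iio M).diff).image _
  · rw [Set.disjoint_left]
    intro a haH ha
    obtain ⟨c, y, hy, rfl⟩ := Set.mem_iUnion.1 haH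
    have := hM _ ha
    simp [f] at this
  · intro h hh
    obtain ⟨c, y, hy, rfl⟩ := Set.mem_iUnion.1 hh
    obtain ⟨p, rfl⟩ := Quotient.exists_rep c
    refine ⟨p, ?_⟩
    ext q
    simp only [lam, Set.mem_setOf_eq]
    rw [← hS]
    constructor
    · rintro ⟨x, hx⟩
      exact (hf _ _ _ _ hx).1.symm
    · intro h
      exact ⟨y, by rw [h]⟩
  · intro R i j hij h1 h2
    have b1 := occ_le I hoccfin _ (hsat _ h1)
    have b2 := occ_le I hoccfin _ (hsat _ h2)
    have k1 := key ⟨R, i⟩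
    have k2 := key ⟨R, j⟩
    simp only at b1 b2
    omega

end FQA
end

section
/- (Realizations Lemma) Assume Σ_UID^rev and Σ_UFD are reversible. For any balanced pssinstance P of a finite instance I that satisfies Σ_UFD, there exists a piecewise realization of P that is both Σ_UFD-compliant and Σ_UID^rev-compliant. -/
namespace FQA

variable {σ : Sig} {α β : Type}

/-- Positions `i` and `j` of relation `R` are `↔_FUN`-related: equal, or both UFDs
`R^i → R^j` and `R^j → R^i` are in `Sf`. -/
def funEq (Sf : Set (UFD σ)) (R : σ.Rel) (i j : Fin (σ.ar R)) : Prop :=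
  i = j ∨ ∃ h : i ≠ j, (⟨R, i, j, h⟩ : UFD σ) ∈ Sf ∧ (⟨R, j, i, h.symm⟩ : UFD σ) ∈ Sf

/-- The `↔_FUN`-class of position `i` of relation `R`. -/
def fclass (Sf : Set (UFD σ)) (R : σ.Rel) (i : Fin (σ.ar R)) : Set (Fin (σ.ar R)) :=
  {j | funEq Sf R i j}

/-- Projection of a piecewise instance to a position: the elements appearing at that
position in some tuple of the corresponding `↔_FUN`-class. -/
def projPI (Sf : Set (UFD σ))
    (PI : (R : σ.Rel) → Set (Fin (σ.ar R)) → Set (Fin (σ.ar R) → ℕ))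
    (p : σ.Pos) : Set ℕ :=
  {a | ∃ t ∈ PI p.1 (fclass Sf p.1 p.2), t p.2 = a}

lemma fin_activeDom_aux {σ : Sig} (I : Inst σ ℕ) (hfin : I.Finite) : (activeDom I).Finite := by
  have : activeDom I = ⋃ F ∈ I, Set.range F.2 := by
    ext a
    simp [activeDom]
  rw [this]
  exact hfin.biUnion (fun F _ => Set.finite_range _)

lemma exists_enum_aux (W : Set ℕ) (hW : W.Finite) :
    ∃ e : ℕ → ℕ, (∀ k < W.ncard, e k ∈ W) ∧ (∀ a ∈ W, ∃ k < W.ncard, e k = a) ∧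
      (∀ k < W.ncard, ∀ l < W.ncard, e k = e l → k = l) := by
  have : Finite W := hW
  have f : Fin W.ncard ≃ W := (Finite.equivFinOfCardEq rfl).symm
  refine ⟨fun k => if h : k < W.ncard then (f ⟨k, h⟩ : ℕ) else 0, ?_, ?_, ?_⟩
  · intro k hk
    simp [hk]
  · intro a ha
    refine ⟨f.symm ⟨a, ha⟩, (f.symm ⟨a, ha⟩).2, ?_⟩
    have h2 : (f.symm ⟨a, ha⟩ : ℕ) < W.ncard := (f.symm ⟨a, ha⟩).2
    simp
  · intro k hk l hl h
    simp only [hk, hl, dif_pos] at h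
    have := f.injective (Subtype.ext h)
    simpa using this

lemma funEq_aux {σ : Sig} {Sf : Set (UFD σ)} (hT : TransClosedUFD Sf) {R : σ.Rel}
    {i j k : Fin (σ.ar R)} (h1 : funEq Sf R i j) (h2 : funEq Sf R i k) : funEq Sf R j k := by
  by_cases hjk : j = k
  · exact Or.inl hjk
  rcases h1 with rfl | ⟨n1, a1, b1⟩
  · exact h2
  rcases h2 with rfl | ⟨n2, a2, b2⟩
  · exact Or.inr ⟨n1.symm, b1, a1⟩
  · exact Or.inr ⟨hjk, hT R j i k n1.symm n2 hjk b1 a2, hT R k i j n2.symm n1 (Ne.symm hjk) b2 a1⟩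

/-- **Realizations Lemma.** For reversible UIDs `Su` and UFDs `Sf`, any balanced
pssinstance `(I, H, lam)` of a finite instance `I` satisfying `Sf` has a piecewise
realization (a family of tuple sets over the `↔_FUN`-classes) that is both
`Sf`-compliant and `Su`-compliant. -/
theorem realizations
    {σ : Sig} (Su : Set (UID σ)) (Sf : Set (UFD σ))
    (hrev : Reversible Su Sf)
    (I : Inst σ ℕ) (hfin : I.Finite)
    (hsat : ∀ φ ∈ Sf, satUFD I φ)
    (H : Set ℕ) (lam : ℕ → Set σ.Pos)
    (hpss : IsPSS Su I H lam)
    (hbal : BalancedPSS Su Sf I H lam) :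
    ∃ PI : (R : σ.Rel) → Set (Fin (σ.ar R)) → Set (Fin (σ.ar R) → ℕ),
      -- the projection of `I` to each `↔_FUN`-class is contained in the tuples
      (∀ (R : σ.Rel) (u : Fin (σ.ar R) → ℕ), (⟨R, u⟩ : Fact σ ℕ) ∈ I →
        ∀ i : Fin (σ.ar R), ∃ t ∈ PI R (fclass Sf R i), ∀ j ∈ fclass Sf R i, t j = u j) ∧
      -- the set of elements occurring in the piecewise instance is `dom(I) ⊔ H`
      ({a : ℕ | ∃ (R : σ.Rel) (i : Fin (σ.ar R)), ∃ t ∈ PI R (fclass Sf R i),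
          ∃ j ∈ fclass Sf R i, t j = a} = activeDom I ∪ H) ∧
      -- every tuple not coming from `I` consists of elements that want their positions
      (∀ (R : σ.Rel) (i : Fin (σ.ar R)), ∀ t ∈ PI R (fclass Sf R i),
        (¬ ∃ u : Fin (σ.ar R) → ℕ, (⟨R, u⟩ : Fact σ ℕ) ∈ I ∧
            ∀ j ∈ fclass Sf R i, t j = u j) →
        ∀ j ∈ fclass Sf R i, wantsP Su I H lam ⟨R, j⟩ (t j)) ∧
      -- `Sf`-compliance: no two distinct tuples of a class agree at any position
      (∀ (R : σ.Rel) (i : Fin (σ.ar R)), ∀ t ∈ PI R (fclass Sf R i),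
        ∀ t' ∈ PI R (fclass Sf R i),
        (∃ j ∈ fclass Sf R i, t j = t' j) → ∀ j ∈ fclass Sf R i, t j = t' j) ∧
      -- `Su`-compliance: the projections satisfy all UIDs of `Su`
      (∀ τ ∈ Su, projPI Sf PI τ.src ⊆ projPI Sf PI τ.dst) := by
  obtain ⟨hTI, hTF, -, -⟩ := hrev
  obtain ⟨hHf, hdis, hlam⟩ := hpss
  have hocc : ∀ (p : σ.Pos) a, occursAt I p a → a ∈ activeDom I := by
    rintro p a ⟨t, ht, rfl⟩
    exact ⟨_, ht, _, rfl⟩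
  have hWsub : ∀ p a, wantsP Su I H lam p a → a ∈ activeDom I ∪ H := by
    rintro p a (⟨⟨τ, -, -, h⟩, -⟩ | ⟨h, -⟩)
    · exact Or.inl (hocc _ _ h)
    · exact Or.inr h
  have hWno : ∀ p a, wantsP Su I H lam p a → ¬ occursAt I p a := by
    rintro p a (⟨-, h⟩ | ⟨h, -⟩) ho
    · exact h ho
    · exact Set.disjoint_left.mp hdis h (hocc _ _ ho)
  have hWfin : ∀ p, {a | wantsP Su I H lam p a}.Finite := fun p =>
    ((fin_activeDom_aux I hfin).union hHf).subset (hWsub p)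
  choose e he1 he2 he3 using fun p => exists_enum_aux _ (hWfin p)
  have hcard : ∀ (R : σ.Rel) (i j : Fin (σ.ar R)), funEq Sf R i j →
      {a : ℕ | wantsP Su I H lam ⟨R, i⟩ a}.ncard =
      {a : ℕ | wantsP Su I H lam ⟨R, j⟩ a}.ncard := by
    rintro R i j (rfl | ⟨h, a, b⟩)
    · rfl
    · exact hbal R i j h a b
  have hfd : ∀ (R : σ.Rel) (i j : Fin (σ.ar R)), funEq Sf R i j → ∀ u v : Fin (σ.ar R) → ℕ,
      (⟨R, u⟩ : Fact σ ℕ) ∈ I → (⟨R, v⟩ : Fact σ ℕ) ∈ I → u i = v i → u j = v j := by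
    rintro R i j (rfl | ⟨h, a, b⟩) u v hu hv huv
    · exact huv
    · exact hsat _ a u v hu hv huv
  let PI : (R : σ.Rel) → Set (Fin (σ.ar R)) → Set (Fin (σ.ar R) → ℕ) := fun R C =>
    {t | (∃ u : Fin (σ.ar R) → ℕ, (⟨R, u⟩ : Fact σ ℕ) ∈ I ∧ ∀ j ∈ C, t j = u j) ∨
      ∃ k, ∀ j ∈ C, k < {a : ℕ | wantsP Su I H lam ⟨R, j⟩ a}.ncard ∧ t j = e ⟨R, j⟩ k}
  have hself : ∀ (R : σ.Rel) (i : Fin (σ.ar R)), i ∈ fclass Sf R i := fun R i => Or.inl rfl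
  have hold : ∀ (p : σ.Pos) a, occursAt I p a → a ∈ projPI Sf PI p := by
    rintro p a ⟨t, ht, rfl⟩
    exact ⟨t, Or.inl ⟨t, ht, fun _ _ => rfl⟩, rfl⟩
  have hnew : ∀ (p : σ.Pos) a, wantsP Su I H lam p a → a ∈ projPI Sf PI p := by
    rintro ⟨R, i⟩ a ha
    obtain ⟨k, hk, hka⟩ := he2 ⟨R, i⟩ a ha
    refine ⟨fun j => e ⟨R, j⟩ k, Or.inr ⟨k, fun j hj => ⟨?_, rfl⟩⟩, hka⟩
    rw [← hcard R i j hj]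
    exact hk
  have hcases : ∀ (R : σ.Rel) (i : Fin (σ.ar R)), ∀ t ∈ PI R (fclass Sf R i),
      ∀ j ∈ fclass Sf R i, occursAt I ⟨R, j⟩ (t j) ∨ wantsP Su I H lam ⟨R, j⟩ (t j) := by
    rintro R i t (⟨u, hu, h⟩ | ⟨k, h⟩) j hj
    · exact Or.inl ⟨u, hu, (h j hj).symm⟩
    · right
      rw [(h j hj).2]
      exact he1 ⟨R, j⟩ k (h j hj).1
  refine ⟨PI, ?_, ?_, ?_, ?_, ?_⟩
  · intro R u hu i
    exact ⟨u, Or.inl ⟨u, hu, fun _ _ => rfl⟩, fun _ _ => rfl⟩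
  · have key : ∀ (p : σ.Pos) a, a ∈ projPI Sf PI p → ∃ (R : σ.Rel) (i : Fin (σ.ar R)),
        ∃ t ∈ PI R (fclass Sf R i), ∃ j ∈ fclass Sf R i, t j = a := by
      rintro ⟨R, i⟩ a ⟨t, ht, h⟩
      exact ⟨R, i, t, ht, i, hself R i, h⟩
    apply Set.Subset.antisymm
    · rintro a ⟨R, i, t, ht, j, hj, rfl⟩
      rcases hcases R i t ht j hj with h | h
      · exact Or.inl (hocc _ _ h)
      · exact hWsub _ _ h
    · rintro a (⟨⟨R, u⟩, hF, i, hi⟩ | h)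
      · exact key ⟨R, i⟩ a (hold _ _ ⟨u, hF, hi⟩)
      · obtain ⟨p, hp⟩ := hlam a h
        refine key p a (hnew _ _ (Or.inr ⟨h, ?_⟩))
        rw [hp]
        exact Or.inl rfl
  · rintro R i t (h | ⟨k, h⟩) hn j hj
    · exact absurd h hn
    · rw [(h j hj).2]
      exact he1 ⟨R, j⟩ k (h j hj).1
  · rintro R i t (⟨u, hu, h⟩ | ⟨k, h⟩) t' (⟨u', hu', h'⟩ | ⟨k', h'⟩) ⟨j, hj, hjj⟩ l hl
    · rw [h l hl, h' l hl]
      refine hfd R j l (funEq_aux hTF hj hl) u u' hu hu' ?_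
      rw [← h j hj, ← h' j hj, hjj]
    · exfalso
      refine hWno ⟨R, j⟩ _ (he1 ⟨R, j⟩ k' (h' j hj).1) ⟨u, hu, ?_⟩
      rw [← (h' j hj).2, ← hjj, h j hj]
    · exfalso
      refine hWno ⟨R, j⟩ _ (he1 ⟨R, j⟩ k (h j hj).1) ⟨u', hu', ?_⟩
      rw [← (h j hj).2, hjj, h' j hj]
    · have : k = k' := by
        refine he3 ⟨R, j⟩ k (h j hj).1 k' (h' j hj).1 ?_
        rw [← (h j hj).2, ← (h' j hj).2, hjj]
      subst this
      rw [(h l hl).2, (h' l hl).2]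
  · have hstep : ∀ τ ∈ Su, ∀ a, occursAt I τ.src a → a ∈ projPI Sf PI τ.dst := by
      intro τ hτ a ha
      by_cases ho : occursAt I τ.dst a
      · exact hold _ _ ho
      · exact hnew _ _ (Or.inl ⟨⟨τ, hτ, rfl, ha⟩, ho⟩)
    rintro τ hτ a ⟨t, ht, rfl⟩
    rcases hcases _ _ t ht _ (hself _ _) with h | ⟨⟨τ', hτ', hd, h⟩, -⟩ | ⟨hH, h⟩
    · exact hstep τ hτ _ h
    · by_cases hne : τ'.src = τ.dst
      · rw [← hne]
        exact hold _ _ h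
      · exact hstep _ (hTI τ' hτ' τ hτ hd hne) _ h
    · refine hnew _ _ (Or.inr ⟨hH, ?_⟩)
      obtain ⟨p, hp⟩ := hlam _ hH
      rw [hp] at h ⊢
      by_cases hne : p = τ.dst
      · exact Or.inl hne
      right
      refine ⟨hne, ?_⟩
      rcases h with h | ⟨hn, h⟩
      · obtain ⟨s, d, n⟩ := τ
        have h' : p = s := h
        subst h'
        exact hτ
      · exact hTI _ h τ hτ rfl hne

end FQA
end

section
/- (Weak-Soundness Transitivity) Assume Σ_UID^rev and Σ_UFD are reversible (in particular Σ_UID^rev is transitively closed and closed under reverses). If I' is a weakly-sound superinstance of I (for Σ_UID^rev and I), and I is a weakly-sound superinstance of I₀ (for Σ_UID^rev and I₀), then I' is a weakly-sound superinstance of I₀ (for Σ_UID^rev and I₀). -/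
namespace FQA

variable {σ : Sig} {α β : Type}

def Rl (Su : Set (UID σ)) (p q : σ.Pos) : Prop :=
  p = q ∨ ∃ h : p ≠ q, (⟨p, q, h⟩ : UID σ) ∈ Su

theorem Rl.tr {Su : Set (UID σ)} (hT : TransClosedUID Su) {p q r : σ.Pos}
    (h1 : Rl Su p q) (h2 : Rl Su q r) : Rl Su p r := by
  rcases h1 with rfl | ⟨n1, h1⟩
  · exact h2
  rcases h2 with rfl | ⟨n2, h2⟩
  · exact Or.inr ⟨n1, h1⟩
  by_cases h : p = r
  · exact Or.inl h
  · exact Or.inr ⟨h, hT _ h1 _ h2 rfl h⟩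

theorem Rl.sy {Su : Set (UID σ)} (hR : ∀ τ ∈ Su, τ.rev ∈ Su) {p q : σ.Pos}
    (h1 : Rl Su p q) : Rl Su q p := by
  rcases h1 with rfl | ⟨n1, h1⟩
  · exact Or.inl rfl
  · exact Or.inr ⟨n1.symm, hR _ h1⟩

theorem ow_iff (Su : Set (UID σ)) (I : Inst σ α) (p : σ.Pos) (a : α) :
    (occursAt I p a ∨ wants Su I p a) ↔ ∃ q, occursAt I q a ∧ Rl Su q p := by
  constructor
  · rintro (h | ⟨⟨⟨s, d, n⟩, hτ, rfl, ho⟩, -⟩)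
    · exact ⟨p, h, Or.inl rfl⟩
    · exact ⟨s, ho, Or.inr ⟨n, hτ⟩⟩
  · rintro ⟨q, ho, rfl | ⟨n, h⟩⟩
    · exact Or.inl ho
    · by_cases hp : occursAt I p a
      · exact Or.inl hp
      · exact Or.inr ⟨⟨_, h, rfl, ho⟩, hp⟩

/-- **Weak-Soundness Transitivity.** For reversible UIDs `Su` and UFDs `Sf`, if `I'`
is a weakly-sound superinstance of `I` and `I` is a weakly-sound superinstance of
`I₀` (both for `Su`), then `I'` is a weakly-sound superinstance of `I₀`. -/
theorem weak_soundness_transitivity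
    {σ : Sig} (Su : Set (UID σ)) (Sf : Set (UFD σ))
    (hrev : Reversible Su Sf)
    (I₀ I I' : Inst σ ℕ)
    (h01 : I₀ ⊆ I) (h12 : I ⊆ I')
    (hws' : WeaklySound Su I I') (hws : WeaklySound Su I₀ I) :
    I₀ ⊆ I' ∧ WeaklySound Su I₀ I' := by
  obtain ⟨hT, -, hR, -⟩ := hrev
  refine ⟨h01.trans h12, ?_, ?_⟩
  · intro a ha p hp
    have haI : a ∈ activeDom I := by
      obtain ⟨F, hF, hi⟩ := ha
      exact ⟨F, h01 hF, hi⟩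
    obtain ⟨q, hq, hqp⟩ := (ow_iff _ _ _ _).1 (hws'.1 a haI p hp)
    obtain ⟨r, hr, hrq⟩ := (ow_iff _ _ _ _).1 (hws.1 a ha q hq)
    exact (ow_iff _ _ _ _).2 ⟨r, hr, hrq.tr hT hqp⟩
  · intro a ha hn p q hp hq
    by_cases haI : a ∈ activeDom I
    · obtain ⟨p', hp', h1⟩ := (ow_iff _ _ _ _).1 (hws'.1 a haI p hp)
      obtain ⟨q', hq', h2⟩ := (ow_iff _ _ _ _).1 (hws'.1 a haI q hq)
      have h3 : Rl Su p' q' := by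
        rcases hws.2 a haI hn p' q' hp' hq' with h | ⟨h, h', -⟩
        · exact Or.inl h
        · exact Or.inr ⟨h, h'⟩
      rcases ((h1.sy hR).tr hT h3).tr hT h2 with h | ⟨h, h'⟩
      · exact Or.inl h
      · exact Or.inr ⟨h, h', hR _ h'⟩
    · exact hws'.2 a ha haI p q hp hq

end FQA
end
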